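/- Let M be an o-minimal densely linearly ordered structure, let a < b in M, and let f : [a,b] × M → M be a definable function; for x ∈ [a,b] write f_x : M → M for f_x(y) = f(x,y), and let π : M² → M be the projection onto the first coordinate. Then there exists a finite partition of [a,b] × M into cells C_1, ..., C_n such that no C_i contains a set of the form {c} × M with c ∈ M, each cell C_i is either (i) the graph {(x, h(x)) : x ∈ D} of a definable continuous function h on a set D that is a single point or an open interval in M, or (ii) a band {(x,y) : x ∈ D, g(x) < y < h(x)} where D is a single point or an open interval and each of g, h is either a definable continuous function on D or the constant −∞ / +∞ respectively, and for each i one of the following holds: the restriction of f_x to the fiber (C_i)_x = {y : (x,y) ∈ C_i} is strictly increasing for every x ∈ π(C_i); this restriction is strictly decreasing for every x ∈ π(C_i); or this restriction is constant for every x ∈ π(C_i). -/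

import Mathlib

open FirstOrder Set

/-- A subset of `M^α` definable with parameters from all of `M`. -/
def DefSet (L : FirstOrder.Language) {M : Type*} [L.Structure M] {α : Type*}
    (s : Set (α → M)) : Prop :=
  Set.Definable (Set.univ : Set M) L s

/-- A subset of `M` definable with parameters from all of `M`. -/
def DefSet1 (L : FirstOrder.Language) {M : Type*} [L.Structure M] (s : Set M) : Prop :=
  DefSet L {x : Fin 1 → M | x 0 ∈ s}

/-- The language contains the order and the group operation:
the order relation and the graph of addition are definable without parameters
(here: with parameters, which is what is used). -/
def OrdAddDef (L : FirstOrder.Language) (M : Type*) [L.Structure M] [Preorder M] [Add M] : Prop :=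
  DefSet L {x : Fin 2 → M | x 0 < x 1} ∧ DefSet L {x : Fin 3 → M | x 0 + x 1 = x 2}

/-- An open interval, with endpoints allowed to be `±∞`. -/
def IsOpenItvl {M : Type*} [Preorder M] (s : Set M) : Prop :=
  (∃ a b : M, s = Set.Ioo a b) ∨ (∃ a : M, s = Set.Ioi a) ∨ (∃ b : M, s = Set.Iio b) ∨
    s = Set.univ

/-- A finite union of points and open intervals. -/
def FinUnionPtsItvls {M : Type*} [Preorder M] (s : Set M) : Prop :=
  ∃ (k : ℕ) (f : Fin k → Set M),
    (∀ i, (∃ x, f i = {x}) ∨ IsOpenItvl (f i)) ∧ s = ⋃ i, f i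

/-- Definably complete. -/
def DefComplete (L : FirstOrder.Language) (M : Type*) [L.Structure M] [Preorder M] : Prop :=
  ∀ s : Set M, DefSet1 L s → s.Nonempty → BddAbove s → ∃ a : M, IsLUB s a

/-- Locally o-minimal. -/
def LocOMin (L : FirstOrder.Language) (M : Type*) [L.Structure M] [Preorder M] : Prop :=
  ∀ s : Set M, DefSet1 L s → ∀ a : M,
    ∃ c d : M, c < a ∧ a < d ∧ FinUnionPtsItvls (s ∩ Set.Ioo c d)

/-- Uniformly locally o-minimal of the second kind. -/
def ULOmin2 (L : FirstOrder.Language) (M : Type*) [L.Structure M] [Preorder M] : Prop :=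
  ∀ n : ℕ, 0 < n → ∀ X : Set (Fin n ⊕ Unit → M), DefSet L X →
    ∀ (a : M) (b : Fin n → M),
      ∃ (lo hi : Fin n → M) (c d : M),
        (∀ i, lo i < b i ∧ b i < hi i) ∧ c < a ∧ a < d ∧
        ∀ y : Fin n → M, (∀ i, lo i < y i ∧ y i < hi i) →
          FinUnionPtsItvls {t : M | t ∈ Set.Ioo c d ∧ Sum.elim y (fun _ => t) ∈ X}

/-- The function `f`, restricted to `C ⊆ M`, is definable (its graph over `C` is definable). -/
def DefFunOn1 (L : FirstOrder.Language) {M : Type*} [L.Structure M]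
    (C : Set M) (f : M → M) : Prop :=
  DefSet L {x : Fin 2 → M | x 0 ∈ C ∧ f (x 0) = x 1}

/-- The function `f : M^m → M`, restricted to `C`, is definable. -/
def DefFunOn (L : FirstOrder.Language) {M : Type*} [L.Structure M] {m : ℕ}
    (C : Set (Fin m → M)) (f : (Fin m → M) → M) : Prop :=
  DefSet L {x : Fin m ⊕ Unit → M | (x ∘ Sum.inl) ∈ C ∧ f (x ∘ Sum.inl) = x (Sum.inr ())}

/-!
For fixed `x`, the monotonicity theorem shows that `f x` is locally strictly monotone or constant
near all but finitely many points of `M`. The finite sets `A x` of exceptional points form a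
definable family, so their sizes are uniformly bounded: for all but finitely many `x₀` every point
`(x₀, y)` is normal for the family, i.e. near it the family is empty or a single curve, which makes
the number of points locally constant in `x`. By induction on the bound, cut off over each piece
of the base the part of the fibre below the least exceptional point, which is a continuous function
after refining the base. On the part cut off, definable connectedness of intervals turns local
monotonicity of `f x` into monotonicity, and its type is constant along the base after another
refinement.
-/

section Definability

variable {L : FirstOrder.Language} {M : Type*} [L.Structure M] {α β : Type*}

variable (L) in
/-- The relation `p` on `α`-tuples is definable with parameters. This is `DefSet` phrased for
predicates, so that `fun_prop` can follow the logical connectives. -/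
@[fun_prop]
def DefinablePred (p : (α → M) → Prop) : Prop :=
  DefSet L {v | p v}

variable (L) in
/-- The sets `A x ⊆ M` form a definable family: `{(x, y) | y ∈ A x}` is definable. -/
def DefFamily (A : M → Set M) : Prop :=
  DefinablePred L fun v : Fin 2 → M ↦ v 1 ∈ A (v 0)

variable (L) in
/-- The function `h : M → M` is definable, as a function of `1`-tuples. -/
def DefFun₁ (h : M → M) : Prop :=
  (univ : Set M).DefinableFun L fun v : Fin 1 → M ↦ h (v 0)

variable (L) in
/-- The function `f : M × M → M`, in curried form, is definable, as a function of `2`-tuples. -/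
def DefFun₂ (f : M → M → M) : Prop :=
  (univ : Set M).DefinableFun L fun v : Fin 2 → M ↦ f (v 0) (v 1)

variable {p q : (α → M) → Prop} {s t : (α → M) → M} {A : M → Set M}

@[fun_prop]
theorem definableFun_const_univ (c : M) : (univ : Set M).DefinableFun L fun _ : α → M ↦ c :=
  L.definableFun_const α (mem_univ c)

theorem definableFun_comp_var [Finite α] (hs : (univ : Set M).DefinableFun L s) (i : α → β) :
    (univ : Set M).DefinableFun L fun v : β → M ↦ s (v ∘ i) :=
  hs.comp (g := fun v ↦ v ∘ i) fun _ ↦ by simp only [Function.comp_apply]; fun_prop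

namespace DefinablePred

@[fun_prop]
theorem const (r : Prop) : DefinablePred L fun _ : α → M ↦ r := by
  by_cases hr : r
  · simpa only [DefinablePred, hr] using! Set.definable_univ
  · simpa only [DefinablePred, hr] using! Set.definable_empty

@[fun_prop]
theorem and (hp : DefinablePred L p) (hq : DefinablePred L q) :
    DefinablePred L fun v ↦ p v ∧ q v :=
  hp.inter hq

@[fun_prop]
theorem or (hp : DefinablePred L p) (hq : DefinablePred L q) :
    DefinablePred L fun v ↦ p v ∨ q v :=
  hp.union hq

@[fun_prop]
theorem not (hp : DefinablePred L p) : DefinablePred L fun v ↦ ¬ p v :=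
  hp.compl

@[fun_prop]
theorem imp (hp : DefinablePred L p) (hq : DefinablePred L q) :
    DefinablePred L fun v ↦ p v → q v := by
  simpa only [imp_iff_not_or] using hp.not.or hq

@[fun_prop]
theorem iff (hp : DefinablePred L p) (hq : DefinablePred L q) :
    DefinablePred L fun v ↦ (p v ↔ q v) := by
  simpa only [iff_iff_implies_and_implies] using (hp.imp hq).and (hq.imp hp)

theorem comp [Finite β] {r : (β → M) → Prop} (hr : DefinablePred L r) {s : β → (α → M) → M}
    (hs : ∀ i, (univ : Set M).DefinableFun L (s i)) :
    DefinablePred L fun v ↦ r fun i ↦ s i v :=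
  Set.Definable.preimage_map (F := fun v i ↦ s i v) hs hr

theorem comp_var {r : (β → M) → Prop} (hr : DefinablePred L r) (i : β → α) :
    DefinablePred L fun v : α → M ↦ r (v ∘ i) :=
  Set.Definable.preimage_comp i hr

theorem exists_tuple [Finite β] {r : (α → M) → (β → M) → Prop}
    (hr : DefinablePred L fun w : α ⊕ β → M ↦ r (w ∘ Sum.inl) (w ∘ Sum.inr)) :
    DefinablePred L fun v ↦ ∃ u, r v u :=
  Set.Definable.exists_of_finite hr

theorem forall_of_finite {ι : Type*} [Finite ι] {r : ι → (α → M) → Prop}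
    (hr : ∀ i, DefinablePred L (r i)) : DefinablePred L fun v ↦ ∀ i, r i v := by
  simpa only [DefinablePred, DefSet, ofPred_forall] using Set.definable_iInter_of_finite hr

theorem exists_of_finite {ι : Type*} [Finite ι] {r : ι → (α → M) → Prop}
    (hr : ∀ i, DefinablePred L (r i)) : DefinablePred L fun v ↦ ∃ i, r i v := by
  simpa only [not_forall, not_not] using (forall_of_finite fun i ↦ (hr i).not).not

@[fun_prop]
theorem eq (hs : (univ : Set M).DefinableFun L s) (ht : (univ : Set M).DefinableFun L t) :
    DefinablePred L fun v ↦ s v = t v :=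
  hs.ofPred_eq ht

@[fun_prop]
theorem mem_set {S : Set M} (hS : DefSet1 L S) (hs : (univ : Set M).DefinableFun L s) :
    DefinablePred L fun v ↦ s v ∈ S :=
  comp (r := fun w : Fin 1 → M ↦ w 0 ∈ S) hS fun _ ↦ hs

@[fun_prop]
theorem mem_family (hA : DefFamily L A) (hs : (univ : Set M).DefinableFun L s)
    (ht : (univ : Set M).DefinableFun L t) : DefinablePred L fun v ↦ t v ∈ A (s v) :=
  comp hA (s := ![s, t]) (by simp [Fin.forall_fin_two, hs, ht])

theorem defSet1 {r : M → Prop} (hr : DefinablePred L fun v : Fin 1 → M ↦ r (v 0)) :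
    DefSet1 L {y | r y} :=
  hr

theorem defFamily {r : M → M → Prop} (hr : DefinablePred L fun v : Fin 2 → M ↦ r (v 0) (v 1)) :
    DefFamily L fun x ↦ {y | r x y} :=
  hr

end DefinablePred

@[fun_prop]
theorem DefinablePred.exists {r : (α → M) → M → Prop}
    (hr : DefinablePred L fun w : Option α → M ↦ r (fun i ↦ w (some i)) (w none)) :
    DefinablePred L fun v ↦ ∃ y, r v y := by
  have hr' := hr.comp_var (fun o ↦ o.elim (Sum.inr ()) Sum.inl : Option α → α ⊕ Unit)
  simpa only [(Equiv.funUnique Unit M).surjective.exists] using!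
    exists_tuple (r := fun v u ↦ r v (u ())) hr'

@[fun_prop]
theorem DefinablePred.forall {r : (α → M) → M → Prop}
    (hr : DefinablePred L fun w : Option α → M ↦ r (fun i ↦ w (some i)) (w none)) :
    DefinablePred L fun v ↦ ∀ y, r v y := by
  simpa only [not_exists, not_not] using (DefinablePred.exists (r := fun v y ↦ ¬ r v y) hr.not).not

theorem DefFun₁.comp {h : M → M} (hh : DefFun₁ L h) (hs : (univ : Set M).DefinableFun L s) :
    (univ : Set M).DefinableFun L fun v ↦ h (s v) :=
  Set.DefinableFun.comp (g := fun v (_ : Fin 1) ↦ s v) (fun _ ↦ hs) hh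

theorem DefFun₁.of_graph {h : M → M}
    (hh : DefinablePred L fun v : Fin 2 → M ↦ h (v 0) = v 1) : DefFun₁ L h :=
  hh.comp_var ![some 0, none]

theorem DefFun₁.defFunOn1 {h : M → M} {D : Set M} (hh : DefFun₁ L h) (hD : DefSet1 L D) :
    DefFunOn1 L D h :=
  DefinablePred.and (.mem_set hD (by fun_prop)) (.eq (hh.comp (by fun_prop)) (by fun_prop))

theorem DefFun₂.of_graph {f : M → M → M}
    (hf : DefinablePred L fun v : Fin 3 → M ↦ f (v 0) (v 1) = v 2) : DefFun₂ L f :=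
  hf.comp_var ![some 0, some 1, none]

theorem DefFun₂.comp {f : M → M → M} (hf : DefFun₂ L f) (hs : (univ : Set M).DefinableFun L s)
    (ht : (univ : Set M).DefinableFun L t) : (univ : Set M).DefinableFun L fun v ↦ f (s v) (t v) :=
  Set.DefinableFun.comp (g := fun v ↦ ![s v, t v])
    (by simp [Set.DefinableMap, Fin.forall_fin_two, hs, ht]) hf

theorem DefFamily.exists_defFun₁_mem (hA : DefFamily L A) (hsub : ∀ x, (A x).Subsingleton) :
    ∃ σ : M → M, DefFun₁ L σ ∧ ∀ x, (A x).Nonempty → σ x ∈ A x := by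
  classical
  let σ : M → M := fun x ↦ if h : (A x).Nonempty then h.some else x
  have mem_σ {x} (h : (A x).Nonempty) : σ x ∈ A x := by
    simpa only [σ, dif_pos h] using h.some_mem
  have graph_σ (x y : M) : σ x = y ↔ y ∈ A x ∨ (¬ ∃ z, z ∈ A x) ∧ x = y := by
    by_cases h : (A x).Nonempty
    · have h' : ∃ z, z ∈ A x := h
      simp only [h', not_true_eq_false, false_and, or_false]
      exact ⟨fun e ↦ e ▸ mem_σ h, fun hy ↦ hsub x (mem_σ h) hy⟩
    · have h' : ¬ ∃ z, z ∈ A x := h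
      simp only [σ, dif_neg h, h', not_false_eq_true, true_and]
      exact ⟨Or.inr, fun hy ↦ hy.resolve_left fun hy ↦ h ⟨y, hy⟩⟩
  refine ⟨σ, .of_graph ?_, fun x ↦ mem_σ⟩
  simp only [graph_σ]
  fun_prop (disch := assumption)

theorem DefFamily.defSet1_le_ncard (hA : DefFamily L A) (hfin : ∀ x, (A x).Finite) (n : ℕ) :
    DefSet1 L {x | n ≤ (A x).ncard} := by
  have le_ncard_iff (x : M) : n ≤ (A x).ncard ↔
      ∃ u : Fin n → M, (∀ i j, u i = u j → i = j) ∧ ∀ i, u i ∈ A x := by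
    have : Finite (A x) := hfin x
    constructor
    · intro h
      let e : Fin (A x).ncard ≃ A x := (Finite.equivFinOfCardEq (Nat.card_coe_set_eq _)).symm
      exact ⟨fun i ↦ e (i.castLE h),
        fun i j hij ↦ Fin.castLE_injective h (e.injective (Subtype.ext hij)), fun i ↦ (e _).2⟩
    · rintro ⟨u, hinj, hu⟩
      rw [← Nat.card_fin n, ← ncard_range_of_injective fun i j ↦ hinj i j]
      exact ncard_le_ncard (range_subset_iff.2 hu) (hfin x)
  simp only [le_ncard_iff]
  refine DefinablePred.defSet1 (.exists_tuple (.and (.forall_of_finite fun i ↦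
    .forall_of_finite fun j ↦ ?_) (.forall_of_finite fun i ↦ ?_)))
  · simp only [Function.comp_apply]
    fun_prop
  · simp only [Function.comp_apply]
    fun_prop (disch := assumption)

end Definability
open Filter Topology

/-- The structure `M` is o-minimal: the order is definable, and every definable subset of `M` is
a finite union of points and open intervals. -/
class IsOMinimal (L : FirstOrder.Language) (M : Type*) [L.Structure M] [LinearOrder M] : Prop where
  defSet_lt : DefSet L {x : Fin 2 → M | x 0 < x 1}
  finUnionPtsItvls : ∀ X : Set M, DefSet1 L X → FinUnionPtsItvls X

namespace DefinablePred

variable {L : FirstOrder.Language} {M : Type*} [L.Structure M] [LinearOrder M] [IsOMinimal L M]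
  {α : Type*} {s t u : (α → M) → M}

@[fun_prop]
theorem lt (hs : (univ : Set M).DefinableFun L s) (ht : (univ : Set M).DefinableFun L t) :
    DefinablePred L fun v ↦ s v < t v :=
  comp (IsOMinimal.defSet_lt : DefinablePred L fun x : Fin 2 → M ↦ x 0 < x 1) (s := ![s, t])
    (by simp [Fin.forall_fin_two, hs, ht])

@[fun_prop]
theorem le (hs : (univ : Set M).DefinableFun L s) (ht : (univ : Set M).DefinableFun L t) :
    DefinablePred L fun v ↦ s v ≤ t v := by
  simpa only [not_lt] using (lt ht hs).not

@[fun_prop]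
theorem mem_Ioo (hs : (univ : Set M).DefinableFun L s) (ht : (univ : Set M).DefinableFun L t)
    (hu : (univ : Set M).DefinableFun L u) : DefinablePred L fun v ↦ t v ∈ Ioo (s v) (u v) :=
  (lt hs ht).and (lt ht hu)

@[fun_prop]
theorem mem_Ioc (hs : (univ : Set M).DefinableFun L s) (ht : (univ : Set M).DefinableFun L t)
    (hu : (univ : Set M).DefinableFun L u) : DefinablePred L fun v ↦ t v ∈ Ioc (s v) (u v) :=
  (lt hs ht).and (le ht hu)

@[fun_prop]
theorem mem_Icc (hs : (univ : Set M).DefinableFun L s) (ht : (univ : Set M).DefinableFun L t)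
    (hu : (univ : Set M).DefinableFun L u) : DefinablePred L fun v ↦ t v ∈ Icc (s v) (u v) :=
  (le hs ht).and (le ht hu)

variable [TopologicalSpace M] [OrderTopology M] [NoMaxOrder M] {p : (α → M) → M → Prop}

@[fun_prop]
theorem eventually_nhds [NoMinOrder M] [Finite α] (hs : (univ : Set M).DefinableFun L s)
    (hp : DefinablePred L fun w : Option α → M ↦ p (fun i ↦ w (some i)) (w none)) :
    DefinablePred L fun v ↦ ∀ᶠ y in 𝓝 (s v), p v y := by
  simp only [(nhds_basis_Ioo _).eventually_iff, Prod.exists]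
  have hs' := definableFun_comp_var hs (some ∘ some)
  refine .exists (.exists (.and (.and (.lt (by fun_prop) hs') (.lt hs' (by fun_prop)))
    (.forall (.imp (by fun_prop) ?_))))
  exact hp.comp_var fun o ↦ o.elim none fun i ↦ some (some (some i))

@[fun_prop]
theorem eventually_nhdsGT [Finite α] (hs : (univ : Set M).DefinableFun L s)
    (hp : DefinablePred L fun w : Option α → M ↦ p (fun i ↦ w (some i)) (w none)) :
    DefinablePred L fun v ↦ ∀ᶠ y in 𝓝[>] s v, p v y := by
  simp only [(nhdsGT_basis _).eventually_iff]
  refine .exists (.and (.lt (definableFun_comp_var hs some) (by fun_prop)) (.forall (.imp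
    (.mem_Ioo (definableFun_comp_var hs (some ∘ some)) (by fun_prop) (by fun_prop)) ?_)))
  exact hp.comp_var fun o ↦ o.elim none fun i ↦ some (some i)

end DefinablePred

section Intervals

variable {M : Type*} [LinearOrder M]

/-- A cell of `M`: a point or an open interval. -/
def IsCell₁ (D : Set M) : Prop :=
  (∃ x₀, D = {x₀}) ∨ IsOpenItvl D

theorem IsCell₁.ordConnected {s : Set M} (hs : IsCell₁ s) : s.OrdConnected := by
  rcases hs with ⟨x, rfl⟩ | ⟨a, b, rfl⟩ | ⟨a, rfl⟩ | ⟨a, rfl⟩ | rfl <;> infer_instance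

theorem IsOpenItvl.exists_isLUB [DenselyOrdered M] [NoMaxOrder M] {s : Set M}
    (hs : IsOpenItvl s) (hne : s.Nonempty) (hbdd : BddAbove s) : ∃ c, IsLUB s c := by
  rcases hs with ⟨a, b, rfl⟩ | ⟨a, rfl⟩ | ⟨a, rfl⟩ | rfl
  · exact ⟨b, isLUB_Ioo (nonempty_Ioo.1 hne)⟩
  · exact absurd hbdd (not_bddAbove_Ioi a)
  · exact ⟨a, isLUB_Iio⟩
  · have : Nonempty M := hne.to_type
    exact absurd hbdd not_bddAbove_univ

theorem FinUnionPtsItvls.exists_isLUB [DenselyOrdered M] [NoMaxOrder M] {s : Set M}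
    (hs : FinUnionPtsItvls s) (hne : s.Nonempty) (hbdd : BddAbove s) : ∃ c, IsLUB s c := by
  obtain ⟨k, f, hf, rfl⟩ := hs
  have piece_isLUB (i : {i // (f i).Nonempty}) : ∃ c, IsLUB (f i) c :=
    (hf i).elim (fun ⟨x, hx⟩ ↦ ⟨x, hx ▸ isLUB_singleton⟩)
      fun h ↦ h.exists_isLUB i.2 (hbdd.mono (subset_iUnion f i))
  choose c hc using piece_isLUB
  obtain ⟨x, hx⟩ := hne
  obtain ⟨i, hi⟩ := mem_iUnion.1 hx
  obtain ⟨_, ⟨m, rfl⟩, hm⟩ :=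
    exists_max_image (range c) id (finite_range c) ⟨_, mem_range_self ⟨i, x, hi⟩⟩
  have hmax : IsLUB (range c) (c m) := IsGreatest.isLUB ⟨mem_range_self m, hm⟩
  exact ⟨c m, by simpa only [iUnion_subtype, iUnion_nonempty_self] using
    (isLUB_iUnion_iff_of_isLUB hc _).1 hmax⟩

theorem exists_mem_Ioo_of_eventually_cofinite [DenselyOrdered M] {p : M → Prop}
    (hp : ∀ᶠ x in cofinite, p x) {u v : M} (huv : u < v) : ∃ x ∈ Ioo u v, p x :=
  ((frequently_cofinite_mem_iff_infinite.2 (Ioo_infinite huv)).and_eventually hp).exists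

variable [TopologicalSpace M] [OrderTopology M]

theorem eventually_nhdsGT_mem_or_notMem_of_ordConnected {s : Set M} (hs : s.OrdConnected) (x : M) :
    (∀ᶠ y in 𝓝[>] x, y ∈ s) ∨ ∀ᶠ y in 𝓝[>] x, y ∉ s := by
  refine or_iff_not_imp_right.2 fun h ↦ ?_
  obtain ⟨y, hys, hxy⟩ :=
    ((not_eventually.1 h).and_eventually self_mem_nhdsWithin).exists
  filter_upwards [Ioo_mem_nhdsGT hxy] with z hz
  obtain ⟨w, hws, hw⟩ :=
    ((not_eventually.1 h).and_eventually (Ioo_mem_nhdsGT hz.1)).exists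
  exact hs.out (not_not.1 hws) (not_not.1 hys) ⟨hw.2.le, hz.2.le⟩

theorem FinUnionPtsItvls.eventually_nhdsGT_mem_or_notMem {s : Set M} (hs : FinUnionPtsItvls s)
    (x : M) : (∀ᶠ y in 𝓝[>] x, y ∈ s) ∨ ∀ᶠ y in 𝓝[>] x, y ∉ s := by
  obtain ⟨k, f, hf, rfl⟩ := hs
  refine or_iff_not_imp_left.2 fun h ↦ ?_
  have key (i : Fin k) : ∀ᶠ y in 𝓝[>] x, y ∉ f i :=
    (eventually_nhdsGT_mem_or_notMem_of_ordConnected (IsCell₁.ordConnected (hf i)) x).resolve_left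
      fun hi ↦ h (hi.mono fun y hy ↦ mem_iUnion_of_mem i hy)
  simpa only [mem_iUnion, not_exists] using! eventually_all.2 key

end Intervals

theorem IsCell₁.defSet1 {L : FirstOrder.Language} {M : Type*} [L.Structure M] [LinearOrder M]
    [IsOMinimal L M] {D : Set M} (hD : IsCell₁ D) : DefSet1 L D := by
  rcases hD with ⟨x, rfl⟩ | ⟨a, b, rfl⟩ | ⟨a, rfl⟩ | ⟨a, rfl⟩ | rfl
  · exact DefinablePred.defSet1 (r := fun y ↦ y = x) (by fun_prop)
  · exact DefinablePred.defSet1 (r := fun y ↦ y ∈ Ioo a b) (by fun_prop)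
  · exact DefinablePred.defSet1 (r := fun y ↦ a < y) (by fun_prop)
  · exact DefinablePred.defSet1 (r := fun y ↦ y < a) (by fun_prop)
  · exact DefinablePred.defSet1 (r := fun _ ↦ True) (by fun_prop)

namespace IsOMinimal

variable (L : FirstOrder.Language) {M : Type*} [L.Structure M] [LinearOrder M] [IsOMinimal L M]
  {S : Set M}

theorem exists_Ioo_subset (hS : DefSet1 L S) (hinf : S.Infinite) :
    ∃ u v, u < v ∧ Ioo u v ⊆ S := by
  obtain ⟨k, f, hf, rfl⟩ := finUnionPtsItvls S hS
  obtain ⟨i, hi⟩ : ∃ i, (f i).Infinite := by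
    by_contra! h
    exact hinf (finite_iUnion h)
  obtain ⟨u, hu, v, hv, huv⟩ := hi.nontrivial.exists_lt
  exact ⟨u, v, huv, Ioo_subset_Icc_self.trans
    (((IsCell₁.ordConnected (hf i)).out hu hv).trans (subset_iUnion f i))⟩

theorem exists_isLUB [DenselyOrdered M] [NoMaxOrder M] (hS : DefSet1 L S) (hne : S.Nonempty)
    (hbdd : BddAbove S) : ∃ c, IsLUB S c :=
  (finUnionPtsItvls S hS).exists_isLUB hne hbdd

theorem eventually_cofinite_mem (hS : DefSet1 L S) (h : ∀ u v, u < v → ∃ x ∈ Ioo u v, x ∈ S) :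
    ∀ᶠ x in cofinite, x ∈ S := by
  by_contra hfin
  obtain ⟨u, v, huv, hsub⟩ := exists_Ioo_subset L (S := Sᶜ) hS.compl hfin
  obtain ⟨x, hx, hxS⟩ := h u v huv
  exact hsub hx hxS

variable [TopologicalSpace M] [OrderTopology M]

theorem eventually_nhdsGT_mem_of_frequently (hS : DefSet1 L S) {x : M}
    (h : ∃ᶠ y in 𝓝[>] x, y ∈ S) : ∀ᶠ y in 𝓝[>] x, y ∈ S :=
  ((finUnionPtsItvls S hS).eventually_nhdsGT_mem_or_notMem x).resolve_right h

variable [DenselyOrdered M] [NoMaxOrder M]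

/-- Closed intervals are definably connected. -/
theorem mem_of_forall_eventually_mem_iff (hS : DefSet1 L S) {c d : M} (hcd : c ≤ d)
    (h : ∀ x ∈ Icc c d, ∀ᶠ y in 𝓝 x, (y ∈ S ↔ x ∈ S)) (hc : c ∈ S) : d ∈ S := by
  let T : Set M := {x | x ∈ Icc c d ∧ ∀ y ∈ Icc c x, y ∈ S}
  have hcT : c ∈ T := ⟨left_mem_Icc.2 hcd, fun y hy ↦ le_antisymm hy.1 hy.2 ▸ hc⟩
  obtain ⟨e, he⟩ := exists_isLUB L (S := T)
    (DefinablePred.defSet1 (by fun_prop (disch := assumption))) ⟨c, hcT⟩ ⟨d, fun x hx ↦ hx.1.2⟩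
  have hced : e ∈ Icc c d := ⟨he.1 hcT, he.2 fun x hx ↦ hx.1.2⟩
  have below_e {y : M} (hcy : c ≤ y) (hye : y < e) : y ∈ S := by
    obtain ⟨z, hz, hyz⟩ := (lt_isLUB_iff he).1 hye
    exact hz.2 y ⟨hcy, hyz.le⟩
  have heS : e ∈ S := by
    obtain ⟨y, hyT, hy⟩ :=
      ((he.frequently_nhds_mem ⟨c, hcT⟩).and_eventually (h e hced)).exists
    exact hy.1 (hyT.2 y ⟨hyT.1.1, le_rfl⟩)
  rcases hced.2.eq_or_lt with rfl | hed
  · exact heS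
  have near_e : ∀ᶠ y in 𝓝[>] e, y ∈ S :=
    nhdsWithin_le_nhds ((h e hced).mono fun y hy ↦ hy.2 heS)
  obtain ⟨w, hew, hw⟩ := (nhdsGT_basis e).eventually_iff.1 near_e
  obtain ⟨x, hex, hx⟩ := exists_between (lt_min hew hed)
  have hxT : x ∈ T := by
    refine ⟨⟨hced.1.trans hex.le, hx.le.trans (min_le_right _ _)⟩, fun y hy ↦ ?_⟩
    rcases lt_trichotomy y e with hye | rfl | hey
    · exact below_e hy.1 hye
    · exact heS
    · exact hw ⟨hey, hy.2.trans_lt (hx.trans_le (min_le_left _ _))⟩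
  exact absurd (he.1 hxT) hex.not_ge

theorem mem_iff_mem_of_ordConnected (hS : DefSet1 L S) {s : Set M} (hs : s.OrdConnected)
    (h : ∀ x ∈ s, ∀ᶠ y in 𝓝 x, (y ∈ S ↔ x ∈ S)) {c d : M} (hc : c ∈ s) (hd : d ∈ s) :
    c ∈ S ↔ d ∈ S := by
  wlog hcd : c ≤ d generalizing c d
  · exact (this hd hc (le_of_not_ge hcd)).symm
  have h' : ∀ x ∈ Icc c d, ∀ᶠ y in 𝓝 x, (y ∈ S ↔ x ∈ S) := fun x hx ↦ h x (hs.out hc hd hx)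
  refine ⟨mem_of_forall_eventually_mem_iff L hS hcd h', not_imp_not.1 ?_⟩
  exact mem_of_forall_eventually_mem_iff L (S := Sᶜ) hS.compl hcd
    fun x hx ↦ (h' x hx).mono fun y ↦ not_congr

variable [NoMinOrder M]

theorem eventually_cofinite_eventually_mem_iff (hS : DefSet1 L S) :
    ∀ᶠ x in cofinite, ∀ᶠ y in 𝓝 x, (y ∈ S ↔ x ∈ S) := by
  refine eventually_cofinite_mem L (S := {x | ∀ᶠ y in 𝓝 x, (y ∈ S ↔ x ∈ S)})
    (DefinablePred.defSet1 (by fun_prop (disch := assumption))) fun u v huv ↦ ?_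
  obtain ⟨r, hr⟩ : ∃ r : Prop, ∀ᶠ y in 𝓝[>] u, (y ∈ S ↔ r) := by
    by_cases h : ∃ᶠ y in 𝓝[>] u, y ∈ S
    · exact ⟨True, by simpa only [iff_true] using eventually_nhdsGT_mem_of_frequently L hS h⟩
    · exact ⟨False, by simpa only [iff_false] using not_frequently.1 h⟩
  obtain ⟨x, hx, hxuv⟩ :=
    ((eventually_eventually_nhdsWithin.2 hr).and (Ioo_mem_nhdsGT huv)).exists
  rw [isOpen_Ioi.nhdsWithin_eq hxuv.1] at hx
  refine ⟨x, hxuv, hx.mono fun y hy ↦ hy.trans hx.self_of_nhds.symm⟩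

end IsOMinimal

section Monotonicity

variable {L : FirstOrder.Language} {M : Type*} [LinearOrder M]

/-- The relation `y ∈ T x` holds between any two points `x < y` of `s`. -/
def RelatedOn (T : M → Set M) (s : Set M) : Prop :=
  ∀ ⦃x⦄, x ∈ s → ∀ ⦃y⦄, y ∈ s → x < y → y ∈ T x

/-- The function `F` compares on `s` as prescribed by `o`: it is strictly increasing on `s` if `o`
is `lt`, strictly decreasing if `o` is `gt`, and constant if `o` is `eq`. -/
def ComparesOn (o : Ordering) (F : M → M) (s : Set M) : Prop :=
  RelatedOn (fun x ↦ {y | o.Compares (F x) (F y)}) s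

theorem compares_trans {o : Ordering} {x y z : M} (hxy : o.Compares x y)
    (hyz : o.Compares y z) : o.Compares x z := by
  cases o
  · exact lt_trans (a := x) hxy hyz
  · exact Eq.trans (a := x) hxy hyz
  · exact lt_trans (c := x) hyz hxy

/-- The point `x` has a neighbourhood on which `F` compares as prescribed by `o`. The
neighbourhood is an interval, so that this is a definable condition on `x`. -/
def LocallyCompares (o : Ordering) (F : M → M) (x : M) : Prop :=
  ∃ u v, x ∈ Ioo u v ∧ ComparesOn o F (Ioo u v)

section

variable [TopologicalSpace M] [OrderTopology M] [L.Structure M] [IsOMinimal L M]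
  {T : M → Set M} [DenselyOrdered M] [NoMaxOrder M]

theorem DefFamily.exists_infinite_forall_Ioc (hT : DefFamily L T)
    (htrans : ∀ x y z, y ∈ T x → z ∈ T y → z ∈ T x) {u v : M} (huv : u < v)
    (h : ∀ x ∈ Ioo u v, ∀ᶠ y in 𝓝[>] x, y ∈ T x) :
    ∃ d ∈ Ioo u v, {x | x ∈ Ioo u d ∧ ∀ y ∈ Ioc x d, y ∈ T x}.Infinite := by
  -- If every `N d` is finite, then for `y` close to `x` there is some `q ∈ N y₀` between `x` and
  -- the least element `y₀` of `N y` above `x`; by transitivity `q ∈ N y`, against minimality.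
  let N : M → Set M := fun d ↦ {x | x ∈ Ioo u d ∧ ∀ y ∈ Ioc x d, y ∈ T x}
  by_contra! hfin
  obtain ⟨x, hux, hxv⟩ := exists_between huv
  have hND : DefFamily L N := DefinablePred.defFamily (by fun_prop (disch := assumption))
  have hE : DefSet1 L {y | ∃ q ∈ Ioo x y, q ∈ N y} :=
    DefinablePred.defSet1 (by fun_prop (disch := assumption))
  have frequently_dominates : ∃ᶠ y in 𝓝[>] x, ∃ q ∈ Ioo x y, q ∈ N y := by
    refine (nhdsGT_basis x).frequently_iff.2 fun w hxw ↦ ?_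
    obtain ⟨q, hxq, hq⟩ := exists_between (lt_min hxw hxv)
    obtain ⟨w', hqw', hw'⟩ := (nhdsGT_basis q).eventually_iff.1
      (h q ⟨hux.trans hxq, hq.trans_le (min_le_right _ _)⟩)
    obtain ⟨y, hqy, hy⟩ := exists_between (lt_min hqw' (hq.trans_le (min_le_left _ _)))
    exact ⟨y, ⟨hxq.trans hqy, hy.trans_le (min_le_right _ _)⟩, q, ⟨hxq, hqy⟩,
      ⟨hux.trans hxq, hqy⟩, fun z hz ↦
        hw' ⟨hz.1, hz.2.trans_lt (hy.trans_le (min_le_left _ _))⟩⟩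
  obtain ⟨w, hxw, hw⟩ := (nhdsGT_basis x).eventually_iff.1
    (IsOMinimal.eventually_nhdsGT_mem_of_frequently L hE frequently_dominates)
  obtain ⟨y, hxy, hy⟩ := exists_between (lt_min hxw hxv)
  have hyw := hy.trans_le (min_le_left _ _)
  have hyv := hy.trans_le (min_le_right _ _)
  obtain ⟨q, hq, hqN⟩ := hw ⟨hxy, hyw⟩
  obtain ⟨y₀, ⟨hy₀N, hxy₀⟩, hmin⟩ := exists_min_image (N y ∩ Ioi x) id
    ((hfin y ⟨hux.trans hxy, hyv⟩).inter_of_left _) ⟨q, hqN, hq.1⟩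
  obtain ⟨q', hq', hq'N⟩ := hw ⟨hxy₀, hy₀N.1.2.trans hyw⟩
  have hq'Ny : q' ∈ N y := by
    refine ⟨⟨hq'N.1.1, hq'.2.trans hy₀N.1.2⟩, fun z hz ↦ ?_⟩
    rcases le_or_gt z y₀ with hzy₀ | hy₀z
    · exact hq'N.2 z ⟨hz.1, hzy₀⟩
    · exact htrans _ y₀ _ (hq'N.2 y₀ ⟨hq'.2, le_rfl⟩) (hy₀N.2 z ⟨hy₀z, hz.2⟩)
  exact (hmin q' ⟨hq'Ny, hq'.1⟩).not_gt hq'.2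

theorem DefFamily.exists_relatedOn_Ioo (hT : DefFamily L T)
    (htrans : ∀ x y z, y ∈ T x → z ∈ T y → z ∈ T x) {u v : M} (huv : u < v)
    (h : ∀ x ∈ Ioo u v, ∀ᶠ y in 𝓝[>] x, y ∈ T x) :
    ∃ u' v', u' < v' ∧ Ioo u' v' ⊆ Ioo u v ∧ RelatedOn T (Ioo u' v') := by
  obtain ⟨d, hd, hinf⟩ := hT.exists_infinite_forall_Ioc htrans huv h
  obtain ⟨u', v', hu'v', hsub⟩ := IsOMinimal.exists_Ioo_subset L
    (DefinablePred.defSet1 (by fun_prop (disch := assumption))) hinf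
  exact ⟨u', v', hu'v', fun x hx ↦ ⟨(hsub hx).1.1, (hsub hx).1.2.trans hd.2⟩,
    fun x hx y hy hxy ↦ (hsub hx).2 y ⟨hxy, (hsub hy).1.2.le⟩⟩

theorem DefFamily.relatedOn_of_locally (hT : DefFamily L T)
    (htrans : ∀ x y z, y ∈ T x → z ∈ T y → z ∈ T x) {s : Set M} (hs : s.OrdConnected)
    (h : ∀ x ∈ s, ∃ u v, x ∈ Ioo u v ∧ RelatedOn T (Ioo u v)) : RelatedOn T s := by
  intro x hx y hy hxy
  have hD : DefSet1 L {z | ∀ w ∈ Ioc x z, w ∈ T x} :=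
    DefinablePred.defSet1 (by fun_prop (disch := assumption))
  refine (IsOMinimal.mem_iff_mem_of_ordConnected L hD ordConnected_Icc (fun z hz ↦ ?_)
    (left_mem_Icc.2 hxy.le) (right_mem_Icc.2 hxy.le)).1
    (fun w hw ↦ absurd (hw.1.trans_le hw.2) (lt_irrefl x)) y ⟨hxy, le_rfl⟩
  obtain ⟨u, v, hzuv, hT'⟩ := h z (hs.out hx hy hz)
  have extend {z₁ z₂ : M} (h₁ : z₁ ∈ Ioo u v) (h₂ : z₂ ∈ Ioo u v)
      (hz₁ : ∀ w ∈ Ioc x z₁, w ∈ T x) : ∀ w ∈ Ioc x z₂, w ∈ T x := by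
    intro w hw
    rcases le_or_gt w z₁ with hwz₁ | hz₁w
    · exact hz₁ w ⟨hw.1, hwz₁⟩
    have hw' : w ∈ Ioo u v := ⟨h₁.1.trans hz₁w, hw.2.trans_lt h₂.2⟩
    rcases lt_or_ge x z₁ with hxz₁ | hz₁x
    · exact htrans _ z₁ _ (hz₁ z₁ ⟨hxz₁, le_rfl⟩) (hT' h₁ hw' hz₁w)
    · exact hT' ⟨h₁.1.trans_le hz₁x, hw.1.trans hw'.2⟩ hw' hw.1
  filter_upwards [Ioo_mem_nhds hzuv.1 hzuv.2] with z' hz'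
  exact ⟨extend hz' hzuv, extend hzuv hz'⟩

end

@[fun_prop]
theorem DefinablePred.compares [L.Structure M] [IsOMinimal L M] {α : Type*} (o : Ordering)
    {s t : (α → M) → M} (hs : (univ : Set M).DefinableFun L s)
    (ht : (univ : Set M).DefinableFun L t) : DefinablePred L fun v ↦ o.Compares (s v) (t v) := by
  cases o
  · exact .lt hs ht
  · exact .eq hs ht
  · exact .lt ht hs

section

variable {F : M → M}

theorem LocallyCompares.unique [DenselyOrdered M] {o o' : Ordering} {x : M}
    (h : LocallyCompares o F x) (h' : LocallyCompares o' F x) : o = o' := by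
  obtain ⟨u, v, hx, h⟩ := h
  obtain ⟨u', v', hx', h'⟩ := h'
  obtain ⟨z, hxz, hz⟩ := exists_between (lt_min hx.2 hx'.2)
  have hxzv : o.Compares (F x) (F z) :=
    h hx ⟨hx.1.trans hxz, hz.trans_le (min_le_left _ _)⟩ hxz
  have hxzv' : o'.Compares (F x) (F z) :=
    h' hx' ⟨hx'.1.trans hxz, hz.trans_le (min_le_right _ _)⟩ hxz
  exact hxzv.inj hxzv'

theorem LocallyCompares.eventually [TopologicalSpace M] [OrderTopology M] {o : Ordering} {x : M}
    (h : LocallyCompares o F x) : ∀ᶠ y in 𝓝 x, LocallyCompares o F y := by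
  obtain ⟨u, v, hx, h⟩ := h
  filter_upwards [Ioo_mem_nhds hx.1 hx.2] with y hy using ⟨u, v, hy, h⟩

variable [L.Structure M] [IsOMinimal L M]

theorem DefFun₁.defFamily_compares (hF : DefFun₁ L F) (o : Ordering) :
    DefFamily L fun x ↦ {y | o.Compares (F x) (F y)} :=
  DefinablePred.defFamily (.compares o (hF.comp (by fun_prop)) (hF.comp (by fun_prop)))

theorem DefFun₂.defFamily_locallyCompares {f : M → M → M} (hf : DefFun₂ L f) (o : Ordering) :
    DefFamily L fun x ↦ {y | LocallyCompares o (f x) y} := by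
  refine DefinablePred.defFamily (.exists (.exists (.and (by fun_prop) (.forall (.imp (by fun_prop)
    (.forall (.imp (by fun_prop) (.imp (by fun_prop) (.compares o ?_ ?_)))))))))
  all_goals exact hf.comp (by fun_prop) (by fun_prop)

theorem DefFun₁.defSet1_locallyCompares (hF : DefFun₁ L F) (o : Ordering) :
    DefSet1 L {y | LocallyCompares o F y} := by
  have hf : DefFun₂ L fun _ : M ↦ F := hF.comp (by fun_prop)
  exact DefinablePred.defSet1 (.mem_family (hf.defFamily_locallyCompares o)
    (s := fun v ↦ v 0) (by fun_prop) (by fun_prop))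

variable [TopologicalSpace M] [OrderTopology M]

theorem DefFun₁.defSet1_continuousAt [NoMinOrder M] [NoMaxOrder M] (hF : DefFun₁ L F) :
    DefSet1 L {x | ContinuousAt F x} := by
  simp only [ContinuousAt, (nhds_basis_Ioo _).tendsto_right_iff, Prod.forall]
  refine DefinablePred.forall (.forall (.imp ?_ (.eventually_nhds (by fun_prop) ?_)))
  · exact .mem_Ioo (by fun_prop) (hF.comp (by fun_prop)) (by fun_prop)
  · exact .mem_Ioo (by fun_prop) (hF.comp (by fun_prop)) (by fun_prop)

variable [DenselyOrdered M]

theorem ComparesOn.exists_continuousAt (hF : DefFun₁ L F) {o : Ordering} {u v : M} (huv : u < v)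
    (h : ComparesOn o F (Ioo u v)) : ∃ x ∈ Ioo u v, ContinuousAt F x := by
  have of_injOn (hinj : InjOn F (Ioo u v)) : ∃ x ∈ Ioo u v, F '' Ioo u v ∈ 𝓝 (F x) := by
    have himage : DefSet1 L (F '' Ioo u v) :=
      DefinablePred.exists (.and (by fun_prop) (.eq (hF.comp (by fun_prop)) (by fun_prop)))
    obtain ⟨p, q, hpq, hsub⟩ :=
      IsOMinimal.exists_Ioo_subset L himage ((Ioo_infinite huv).image hinj)
    obtain ⟨z, hz⟩ := exists_between hpq
    obtain ⟨x, hx, rfl⟩ := hsub hz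
    exact ⟨x, hx, mem_of_superset (Ioo_mem_nhds hz.1 hz.2) hsub⟩
  cases o
  case lt =>
    have h : StrictMonoOn F (Ioo u v) := h
    obtain ⟨x, hx, himage⟩ := of_injOn h.injOn
    exact ⟨x, hx, h.continuousAt_of_image_mem_nhds (Ioo_mem_nhds hx.1 hx.2) himage⟩
  case eq =>
    obtain ⟨x, hx⟩ := exists_between huv
    refine ⟨x, hx, (continuousAt_congr ?_).2 (continuousAt_const (y := F x))⟩
    filter_upwards [Ioo_mem_nhds hx.1 hx.2] with y hy
    rcases lt_trichotomy x y with hxy | rfl | hyx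
    exacts [(h hx hy hxy).symm, rfl, h hy hx hyx]
  case gt =>
    have h : StrictAntiOn F (Ioo u v) := h
    obtain ⟨x, hx, himage⟩ := of_injOn h.injOn
    exact ⟨x, hx, h.dual_right.continuousAt_of_image_mem_nhds (Ioo_mem_nhds hx.1 hx.2) himage⟩

variable [NoMaxOrder M]

theorem DefFun₁.exists_comparesOn_of_ordConnected (hF : DefFun₁ L F) {s : Set M}
    (hs : s.OrdConnected) (h : ∀ y ∈ s, ∃ o, LocallyCompares o F y) : ∃ o, ComparesOn o F s := by
  rcases s.eq_empty_or_nonempty with rfl | ⟨y₀, hy₀⟩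
  · exact ⟨.eq, fun _ hx ↦ hx.elim⟩
  obtain ⟨o, ho⟩ := h y₀ hy₀
  refine ⟨o, (hF.defFamily_compares o).relatedOn_of_locally (fun _ _ _ ↦ compares_trans) hs
    fun y hy ↦ ?_⟩
  refine (IsOMinimal.mem_iff_mem_of_ordConnected L (hF.defSet1_locallyCompares o) hs
    (fun z hz ↦ ?_) hy₀ hy).1 ho
  obtain ⟨o', ho'⟩ := h z hz
  filter_upwards [ho'.eventually] with z' hz'
  exact ⟨fun h ↦ hz'.unique h ▸ ho', fun h ↦ ho'.unique h ▸ hz'⟩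

variable [NoMinOrder M]

theorem DefFun₁.exists_comparesOn_Ioo (hF : DefFun₁ L F) {u v : M} (huv : u < v) :
    ∃ o u' v', u' < v' ∧ Ioo u' v' ⊆ Ioo u v ∧ ComparesOn o F (Ioo u' v') := by
  let R (o : Ordering) : Set M := {x | ∀ᶠ y in 𝓝[>] x, y ∈ {y | o.Compares (F x) (F y)}}
  have hT (o : Ordering) := hF.defFamily_compares o
  have hR (o : Ordering) : DefSet1 L (R o) :=
    DefinablePred.defSet1 (.eventually_nhdsGT (by fun_prop)
      (.mem_family (hT o) (s := fun w ↦ w (some 0)) (by fun_prop) (by fun_prop)))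
  have exists_mem_R (x : M) : ∃ o, x ∈ R o := by
    by_contra! h
    have h' (o : Ordering) : ∀ᶠ y in 𝓝[>] x, ¬ o.Compares (F x) (F y) := by
      have hS : DefSet1 L {y | o.Compares (F x) (F y)} :=
        DefinablePred.defSet1 (.mem_family (hT o) (s := fun _ ↦ x) (by fun_prop) (by fun_prop))
      exact not_frequently.1
        (mt (IsOMinimal.eventually_nhdsGT_mem_of_frequently L hS) (h o))
    obtain ⟨y, hy⟩ := (eventually_all.2 h').exists
    exact hy _ (cmp_compares (F x) (F y))
  obtain ⟨x, hx, hxR⟩ := exists_mem_Ioo_of_eventually_cofinite (eventually_all.2 fun o ↦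
    IsOMinimal.eventually_cofinite_eventually_mem_iff L (hR o)) huv
  obtain ⟨o, ho⟩ := exists_mem_R x
  obtain ⟨⟨p, q⟩, hxpq, hpq⟩ := (nhds_basis_Ioo x).eventually_iff.1
    ((hxR o).and (Ioo_mem_nhds hx.1 hx.2))
  obtain ⟨u', v', huv', hsub, h⟩ := (hT o).exists_relatedOn_Ioo
    (fun _ _ _ ↦ compares_trans) (hxpq.1.trans hxpq.2) fun z hz ↦ (hpq hz).1.2 ho
  exact ⟨o, u', v', huv', fun z hz ↦ (hpq (hsub hz)).2, h⟩

theorem DefFun₁.eventually_cofinite_locallyCompares (hF : DefFun₁ L F) :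
    ∀ᶠ y in cofinite, ∃ o, LocallyCompares o F y := by
  refine IsOMinimal.eventually_cofinite_mem L (S := {y | ∃ o, LocallyCompares o F y}) ?_ ?_
  · exact DefinablePred.exists_of_finite hF.defSet1_locallyCompares
  · intro u v huv
    obtain ⟨o, u', v', huv', hsub, h⟩ := hF.exists_comparesOn_Ioo huv
    obtain ⟨x, hx⟩ := exists_between huv'
    exact ⟨x, hsub hx, o, u', v', hx, h⟩

theorem DefFun₁.eventually_cofinite_continuousAt (hF : DefFun₁ L F) :
    ∀ᶠ x in cofinite, ContinuousAt F x := by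
  refine IsOMinimal.eventually_cofinite_mem L hF.defSet1_continuousAt fun u v huv ↦ ?_
  obtain ⟨o, u', v', huv', hsub, h⟩ := hF.exists_comparesOn_Ioo huv
  obtain ⟨x, hx, hcont⟩ := h.exists_continuousAt hF huv'
  exact ⟨x, hsub hx, hcont⟩

end

end Monotonicity

section Partitions

variable {α β : Type*} {P : Set α → Prop} {Q : Set β → Prop}

/-- The set `S` is the union of finitely many pairwise disjoint sets satisfying `P`. -/
inductive FinDisjUnion (P : Set α → Prop) : Set α → Prop
  | empty : FinDisjUnion P ∅
  | of {S : Set α} (h : P S) : FinDisjUnion P S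
  | union {S T : Set α} (h : Disjoint S T) (hS : FinDisjUnion P S) (hT : FinDisjUnion P T) :
    FinDisjUnion P (S ∪ T)

namespace FinDisjUnion

theorem preimage_inter {S : Set α} (h : FinDisjUnion P S) {g : β → α} {B : Set β}
    (hQ : ∀ T ⊆ S, P T → FinDisjUnion Q (g ⁻¹' T ∩ B)) : FinDisjUnion Q (g ⁻¹' S ∩ B) := by
  induction h with
  | empty => simpa only [preimage_empty, empty_inter] using .empty
  | of h => exact hQ _ le_rfl h
  | @union S T hST _ _ ihS ihT =>
    rw [preimage_union, union_inter_distrib_right]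
    refine .union (((hST.preimage g).inter_left B).inter_right B) ?_ ?_
    · exact ihS fun U hU ↦ hQ U (hU.trans subset_union_left)
    · exact ihT fun U hU ↦ hQ U (hU.trans subset_union_right)

theorem bind {P' : Set α → Prop} {S : Set α} (h : FinDisjUnion P S)
    (hP' : ∀ T ⊆ S, P T → FinDisjUnion P' T) : FinDisjUnion P' S := by
  simpa only [preimage_id, inter_univ] using h.preimage_inter (g := id) (B := univ)
    fun T hT hPT ↦ by simpa only [preimage_id, inter_univ] using hP' T hT hPT

theorem exists_finite {S : Set α} (h : FinDisjUnion P S) :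
    ∃ (ι : Type) (_ : Finite ι) (C : ι → Set α),
      ⋃ i, C i = S ∧ (∀ i j, i ≠ j → Disjoint (C i) (C j)) ∧ ∀ i, P (C i) := by
  induction h with
  | empty => exact ⟨Empty, inferInstance, Empty.elim, iUnion_of_empty _, nofun, nofun⟩
  | @of S h =>
    exact ⟨Unit, inferInstance, fun _ ↦ S, iUnion_const S,
      fun i j hij ↦ absurd (Subsingleton.elim i j) hij, fun _ ↦ h⟩
  | union hST _ _ ihS ihT =>
    obtain ⟨ι, _, C, rfl, hC, hPC⟩ := ihS
    obtain ⟨κ, _, D, rfl, hD, hPD⟩ := ihT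
    refine ⟨ι ⊕ κ, inferInstance, Sum.elim C D, iUnion_sum, ?_, Sum.rec hPC hPD⟩
    have disjoint (i : ι) (j : κ) : Disjoint (C i) (D j) :=
      hST.mono (subset_iUnion C i) (subset_iUnion D j)
    rintro (i | i) (j | j) hij
    exacts [hC i j (ne_of_apply_ne _ hij), disjoint i j, (disjoint j i).symm,
      hD i j (ne_of_apply_ne _ hij)]

theorem exists_fin {S : Set α} (h : FinDisjUnion P S) :
    ∃ (k : ℕ) (C : Fin k → Set α),
      ⋃ i, C i = S ∧ (∀ i j, i ≠ j → Disjoint (C i) (C j)) ∧ ∀ i, P (C i) := by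
  obtain ⟨ι, _, C, hS, hC, hP⟩ := h.exists_finite
  obtain ⟨k, ⟨e⟩⟩ := Finite.exists_equiv_fin ι
  exact ⟨k, C ∘ e.symm, (e.symm.surjective.iUnion_comp C).trans hS,
    fun i j hij ↦ hC _ _ (e.symm.injective.ne hij), fun i ↦ hP _⟩

end FinDisjUnion

variable {M : Type*} [LinearOrder M]

theorem IsOpenItvl.inter_Iio {D : Set M} (hD : IsOpenItvl D) (c : M) : IsOpenItvl (D ∩ Iio c) := by
  rcases hD with ⟨a, b, rfl⟩ | ⟨a, rfl⟩ | ⟨b, rfl⟩ | rfl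
  · exact .inl ⟨a, min b c, Ioo_inter_Iio⟩
  · exact .inl ⟨a, c, Ioi_inter_Iio⟩
  · exact .inr (.inr (.inl ⟨min b c, Iio_inter_Iio⟩))
  · exact .inr (.inr (.inl ⟨c, univ_inter _⟩))

theorem IsOpenItvl.inter_Ioi {D : Set M} (hD : IsOpenItvl D) (c : M) : IsOpenItvl (D ∩ Ioi c) := by
  rcases hD with ⟨a, b, rfl⟩ | ⟨a, rfl⟩ | ⟨b, rfl⟩ | rfl
  · exact .inl ⟨max a c, b, by rw [inter_comm, ← Ioi_inter_Iio, ← inter_assoc, Ioi_inter_Ioi,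
      Ioi_inter_Iio, max_comm]⟩
  · exact .inr (.inl ⟨max a c, Ioi_inter_Ioi⟩)
  · exact .inl ⟨c, b, Iio_inter_Ioi⟩
  · exact .inr (.inl ⟨c, univ_inter _⟩)

theorem IsCell₁.finDisjUnion_subsingleton_or_disjoint {D E : Set M} (hD : IsCell₁ D)
    (hE : E.Finite) :
    FinDisjUnion (fun T ↦ IsCell₁ T ∧ (T.Subsingleton ∨ Disjoint T E)) D := by
  induction E, hE using Set.Finite.induction_on with
  | empty => exact .of ⟨hD, .inr (disjoint_empty D)⟩
  | @insert c E _ _ ih =>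
    refine ih.bind fun T _ ⟨hT, h⟩ ↦ ?_
    rcases hT with ⟨_, rfl⟩ | hT
    · exact .of ⟨.inl ⟨_, rfl⟩, .inl subsingleton_singleton⟩
    rcases h with h | h
    · exact .of ⟨.inr hT, .inl h⟩
    by_cases hc : c ∈ T
    · have split : T = (T ∩ Iio c ∪ T ∩ Ioi c) ∪ {c} := by
        rw [← inter_union_distrib_left, Iio_union_Ioi, ← sdiff_eq, sdiff_union_of_subset]
        exact singleton_subset_iff.2 hc
      rw [split]
      refine .union (by simp) (.union ?_ (.of ⟨.inr (hT.inter_Iio c), .inr ?_⟩)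
        (.of ⟨.inr (hT.inter_Ioi c), .inr ?_⟩)) (.of ⟨.inl ⟨c, rfl⟩, .inl subsingleton_singleton⟩)
      · exact (Iio_disjoint_Ioi_same.inter_left' T).inter_right' T
      · exact disjoint_insert_right.2 ⟨fun h ↦ h.2.false, h.mono_left inter_subset_left⟩
      · exact disjoint_insert_right.2 ⟨fun h ↦ h.2.false, h.mono_left inter_subset_left⟩
    · exact .of ⟨.inr hT, .inr (disjoint_insert_right.2 ⟨hc, h⟩)⟩

theorem IsCell₁.finDisjUnion_of_eventually_cofinite {D : Set M} (hD : IsCell₁ D) {R : M → Prop}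
    (hR : ∀ᶠ x in cofinite, R x) :
    FinDisjUnion (fun T ↦ IsCell₁ T ∧ (T.Subsingleton ∨ ∀ x ∈ T, R x)) D :=
  (hD.finDisjUnion_subsingleton_or_disjoint hR).bind fun _ _ hT ↦
    .of ⟨hT.1, hT.2.imp_right fun h _ hx ↦ not_not.1 (disjoint_left.1 h hx)⟩

variable {L : FirstOrder.Language} [L.Structure M] [IsOMinimal L M]
  [TopologicalSpace M] [OrderTopology M] [DenselyOrdered M] [NoMinOrder M] [NoMaxOrder M]

theorem IsCell₁.finDisjUnion_continuousOn {D : Set M} (hD : IsCell₁ D) {σ : M → M}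
    (hσ : DefFun₁ L σ) {ι : Type*} [Finite ι] {S : ι → Set M} (hS : ∀ i, DefSet1 L (S i)) :
    FinDisjUnion (fun T ↦ IsCell₁ T ∧ ContinuousOn σ T ∧
      ∀ i, ∀ x ∈ T, ∀ y ∈ T, (x ∈ S i ↔ y ∈ S i)) D := by
  refine (hD.finDisjUnion_of_eventually_cofinite (hσ.eventually_cofinite_continuousAt.and
    (eventually_all.2 fun i ↦ IsOMinimal.eventually_cofinite_eventually_mem_iff L (hS i)))).bind
    fun T _ ⟨hT, h⟩ ↦ .of ⟨hT, ?_⟩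
  rcases h with h | h
  · exact ⟨h.continuousOn σ, fun i _ hx _ hy ↦ by rw [h hx hy]⟩
  · exact ⟨fun x hx ↦ (h x hx).1.continuousWithinAt, fun i _ hx _ hy ↦
      IsOMinimal.mem_iff_mem_of_ordConnected L (hS i) hT.ordConnected
        (fun z hz ↦ (h z hz).2 i) hx hy⟩

end Partitions

section UniformFiniteness

theorem ncard_eq_of_pairwiseDisjoint {α : Type*} {s t : Set α} {U : α → Set α}
    (hU : s.PairwiseDisjoint U) (ht : ∀ z ∈ t, ∃ y ∈ s, z ∈ U y)
    (h : ∀ y ∈ s, (t ∩ U y).Subsingleton ∧ (t ∩ U y).Nonempty) : t.ncard = s.ncard := by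
  choose! φ hφs hφU using ht
  refine ncard_congr (fun z _ ↦ φ z) hφs (fun z w hz hw hzw ↦ ?_) fun y hy ↦ ?_
  · exact (h _ (hφs z hz)).1 ⟨hz, hφU z hz⟩ ⟨hw, hzw ▸ hφU w hw⟩
  · obtain ⟨z, hz, hzy⟩ := (h y hy).2
    exact ⟨z, hz, hU.elim_set (hφs z hz) hy z (hφU z hz) hzy⟩

variable {L : FirstOrder.Language} {M : Type*} [LinearOrder M] [TopologicalSpace M] {A : M → Set M}

/-- The point `(x₀, y₀)` is normal for the family `A`: it has arbitrarily small neighbourhoods in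
which all fibres `A x`, for `x` close to `x₀`, have exactly one point if `y₀ ∈ A x₀`, and none
otherwise. -/
def NormalAt (A : M → Set M) (x₀ y₀ : M) : Prop :=
  ∀ p q, y₀ ∈ Ioo p q → ∃ u v, y₀ ∈ Ioo u v ∧ p ≤ u ∧ v ≤ q ∧
    ∀ᶠ x in 𝓝 x₀, (A x ∩ Ioo u v).Subsingleton ∧ ((A x ∩ Ioo u v).Nonempty ↔ y₀ ∈ A x₀)

variable [OrderTopology M] [NoMinOrder M] [NoMaxOrder M]

theorem NormalAt.exists_Ioo_subset {x₀ y₀ : M} (h : NormalAt A x₀ y₀) {W : Set M} (hW : W ∈ 𝓝 y₀) :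
    ∃ u v, y₀ ∈ Ioo u v ∧ Ioo u v ⊆ W ∧
      ∀ᶠ x in 𝓝 x₀, (A x ∩ Ioo u v).Subsingleton ∧ ((A x ∩ Ioo u v).Nonempty ↔ y₀ ∈ A x₀) := by
  obtain ⟨⟨p, q⟩, hy₀, hsub⟩ := (nhds_basis_Ioo _).mem_iff.1 hW
  obtain ⟨u, v, huv, hp, hq, hev⟩ := h p q hy₀
  exact ⟨u, v, huv, (Ioo_subset_Ioo hp hq).trans hsub, hev⟩

theorem IsOMinimal.mem_of_forall_lt_imp_eventually_mem (L : FirstOrder.Language) [L.Structure M]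
    [IsOMinimal L M] [DenselyOrdered M] {S : Set M} (hS : DefSet1 L S) {c : M}
    (hc : ∀ z < c, z ∈ S) (h : ∀ b, (∀ z < b, z ∈ S) → ∀ᶠ z in 𝓝 b, z ∈ S) (y : M) : y ∈ S := by
  have hT : DefSet1 L {b | ∀ z < b, z ∈ S} :=
    DefinablePred.defSet1 (by fun_prop (disch := assumption))
  have clopen (b : M) : ∀ᶠ b' in 𝓝 b, ((∀ z < b', z ∈ S) ↔ ∀ z < b, z ∈ S) := by
    by_cases hb : ∀ z < b, z ∈ S
    · obtain ⟨⟨p, q⟩, hbpq, hpq⟩ := (nhds_basis_Ioo b).eventually_iff.1 (h b hb)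
      filter_upwards [Iio_mem_nhds hbpq.2] with b' hb'
      refine iff_of_true (fun z hz ↦ ?_) hb
      exact (lt_or_ge z b).elim (hb z) fun h ↦ hpq ⟨hbpq.1.trans_le h, hz.trans hb'⟩
    · obtain ⟨z, hzb, hz⟩ : ∃ z < b, z ∉ S := by simpa only [not_forall, exists_prop] using hb
      filter_upwards [Ioi_mem_nhds hzb] with b' hb'
      exact iff_of_false (fun h ↦ hz (h z hb')) hb
  obtain ⟨y', hy'⟩ := exists_gt y
  exact (mem_iff_mem_of_ordConnected L hT ordConnected_univ (fun b _ ↦ clopen b)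
    (mem_univ c) (mem_univ y')).1 hc y hy'

variable [L.Structure M] [IsOMinimal L M]

theorem DefFamily.normalAt (hA : DefFamily L A) : DefFamily L fun x ↦ {y | NormalAt A x y} := by
  simp only [NormalAt, Set.Subsingleton, Set.Nonempty, mem_inter_iff]
  exact DefinablePred.defFamily (by fun_prop (disch := assumption))

variable [DenselyOrdered M]

theorem DefFamily.eventually_cofinite_exists_continuousAt (hA : DefFamily L A)
    (hsub : ∀ x, (A x).Subsingleton) :
    ∀ᶠ x₀ in cofinite, ∃ σ : M → M, ContinuousAt σ x₀ ∧
      ((∀ᶠ x in 𝓝 x₀, σ x ∈ A x) ∨ ∀ᶠ x in 𝓝 x₀, A x = ∅) := by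
  obtain ⟨σ, hσ, hσA⟩ := hA.exists_defFun₁_mem hsub
  have hne : DefSet1 L {x | ∃ y, y ∈ A x} :=
    DefinablePred.defSet1 (by fun_prop (disch := assumption))
  filter_upwards [hσ.eventually_cofinite_continuousAt,
    IsOMinimal.eventually_cofinite_eventually_mem_iff L hne] with x₀ hcont hx₀
  refine ⟨σ, hcont, ?_⟩
  by_cases h : ∃ y, y ∈ A x₀
  · exact .inl (hx₀.mono fun x hx ↦ hσA x (hx.2 h))
  · exact .inr (hx₀.mono fun x hx ↦ not_nonempty_iff_eq_empty.1 (mt hx.1 h))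

theorem DefFamily.eventually_cofinite_eventually_lt (hA : DefFamily L A)
    (hfin : ∀ x, (A x).Finite) :
    ∀ᶠ x₀ in cofinite, ∀ s, (∀ y ∈ A x₀, s < y) → ∀ᶠ x in 𝓝 x₀, ∀ y ∈ A x, s < y := by
  have hmin : DefFamily L fun x ↦ {z | z ∈ A x ∧ ∀ y, y ∈ A x → z ≤ y} :=
    DefinablePred.defFamily (by fun_prop (disch := assumption))
  filter_upwards [hmin.eventually_cofinite_exists_continuousAt
    fun x _ hz _ hz' ↦ le_antisymm (hz.2 _ hz'.1) (hz'.2 _ hz.1)] with x₀ ⟨σ, hcont, h⟩ s hs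
  rcases h with h | h
  · filter_upwards [h, hcont.eventually_const_lt (hs _ h.self_of_nhds.1)] with x hx hsx y hy
    exact hsx.trans_le (hx.2 y hy)
  · filter_upwards [h] with x hx y hy
    obtain ⟨z, hz, hzmin⟩ := exists_min_image (A x) id (hfin x) ⟨y, hy⟩
    exact (hx.subset ⟨hz, hzmin⟩).elim

theorem DefFamily.eventually_cofinite_eventually_gt (hA : DefFamily L A)
    (hfin : ∀ x, (A x).Finite) :
    ∀ᶠ x₀ in cofinite, ∀ s, (∀ y ∈ A x₀, y < s) → ∀ᶠ x in 𝓝 x₀, ∀ y ∈ A x, y < s := by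
  have hmax : DefFamily L fun x ↦ {z | z ∈ A x ∧ ∀ y, y ∈ A x → y ≤ z} :=
    DefinablePred.defFamily (by fun_prop (disch := assumption))
  filter_upwards [hmax.eventually_cofinite_exists_continuousAt
    fun x _ hz _ hz' ↦ le_antisymm (hz'.2 _ hz.1) (hz.2 _ hz'.1)] with x₀ ⟨σ, hcont, h⟩ s hs
  rcases h with h | h
  · filter_upwards [h, hcont.eventually_lt_const (hs _ h.self_of_nhds.1)] with x hx hsx y hy
    exact (hx.2 y hy).trans_lt hsx
  · filter_upwards [h] with x hx y hy
    obtain ⟨z, hz, hzmax⟩ := exists_max_image (A x) id (hfin x) ⟨y, hy⟩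
    exact (hx.subset ⟨hz, hzmax⟩).elim

theorem DefFamily.eventually_cofinite_exists_subset_Ioo (hA : DefFamily L A)
    (hfin : ∀ x, (A x).Finite) :
    ∀ᶠ x₀ in cofinite, ∃ c d, ∀ᶠ x in 𝓝 x₀, A x ⊆ Ioo c d := by
  filter_upwards [hA.eventually_cofinite_eventually_lt hfin,
    hA.eventually_cofinite_eventually_gt hfin] with x₀ hlt hgt
  have : Nonempty M := ⟨x₀⟩
  obtain ⟨c', hc'⟩ := (hfin x₀).bddBelow
  obtain ⟨d', hd'⟩ := (hfin x₀).bddAbove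
  obtain ⟨c, hc⟩ := exists_lt c'
  obtain ⟨d, hd⟩ := exists_gt d'
  refine ⟨c, d, ?_⟩
  filter_upwards [hlt c fun y hy ↦ hc.trans_le (hc' hy),
    hgt d fun y hy ↦ (hd' hy).trans_lt hd] with x hxc hxd y hy using ⟨hxc y hy, hxd y hy⟩

theorem DefFamily.eventually_cofinite_exists_Ioo_eq (hA : DefFamily L A)
    (hfin : ∀ x, (A x).Finite) {g : M → M} (hg : DefFun₁ L g) :
    ∀ᶠ x₀ in cofinite, ∃ c d, g x₀ ∈ Ioo c d ∧
      ∀ᶠ x in 𝓝 x₀, ∀ y ∈ A x, y ∈ Ioo c d → y = g x := by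
  have habove : DefFamily L fun x ↦ {y | y ∈ A x ∧ g x < y} :=
    DefinablePred.defFamily (.and (by fun_prop (disch := assumption))
      (.lt (hg.comp (by fun_prop)) (by fun_prop)))
  have hbelow : DefFamily L fun x ↦ {y | y ∈ A x ∧ y < g x} :=
    DefinablePred.defFamily (.and (by fun_prop (disch := assumption))
      (.lt (by fun_prop) (hg.comp (by fun_prop))))
  filter_upwards [habove.eventually_cofinite_eventually_lt fun x ↦ (hfin x).subset fun _ h ↦ h.1,
    hbelow.eventually_cofinite_eventually_gt fun x ↦ (hfin x).subset fun _ h ↦ h.1]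
    with x₀ hlt hgt
  have isolated : (A x₀ \ {g x₀})ᶜ ∈ 𝓝 (g x₀) :=
    ((hfin x₀).sdiff).isClosed.compl_mem_nhds fun h ↦ h.2 rfl
  obtain ⟨⟨c', d'⟩, ⟨hc', hd'⟩, hsub⟩ := (nhds_basis_Ioo _).mem_iff.1 isolated
  obtain ⟨c, hc'c, hc⟩ := exists_between hc'
  obtain ⟨d, hd, hdd'⟩ := exists_between hd'
  refine ⟨c, d, ⟨hc, hd⟩, ?_⟩
  filter_upwards [hlt d fun y hy ↦ not_le.1 fun hyd ↦
      hsub ⟨hc'.trans hy.2, hyd.trans_lt hdd'⟩ ⟨hy.1, hy.2.ne'⟩,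
    hgt c fun y hy ↦ not_le.1 fun hcy ↦
      hsub ⟨hc'c.trans_le hcy, hy.2.trans hd'⟩ ⟨hy.1, hy.2.ne⟩] with x hxd hxc y hy hycd
  rcases lt_trichotomy y (g x) with h | h | h
  · exact absurd hycd.1 (hxc y ⟨hy, h⟩).not_gt
  · exact h
  · exact absurd hycd.2 (hxd y ⟨hy, h⟩).not_gt

theorem DefFamily.eventually_cofinite_eventually_normalAt (hA : DefFamily L A)
    (hfin : ∀ x, (A x).Finite) {g : M → M} (hg : DefFun₁ L g) :
    ∀ᶠ x₀ in cofinite, ∀ᶠ y in 𝓝 (g x₀), NormalAt A x₀ y := by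
  have hgA : DefSet1 L {x | g x ∈ A x} :=
    DefinablePred.defSet1 (.mem_family hA (by fun_prop) (hg.comp (by fun_prop)))
  filter_upwards [hA.eventually_cofinite_exists_Ioo_eq hfin hg,
    hg.eventually_cofinite_continuousAt,
    IsOMinimal.eventually_cofinite_eventually_mem_iff L hgA] with x₀ ⟨c, d, hcd, heq⟩ hcont hmem
  filter_upwards [Ioo_mem_nhds hcd.1 hcd.2] with y hy p q hpq
  have separate : ∃ W ∈ 𝓝 y, ∀ V ⊆ W, V ∈ 𝓝 y → ∀ᶠ x in 𝓝 x₀, (g x ∈ V ↔ y = g x₀) := by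
    rcases eq_or_ne y (g x₀) with rfl | hne
    · refine ⟨univ, univ_mem, fun V _ hV ↦ ?_⟩
      simpa only [iff_true] using hcont.eventually_mem hV
    · obtain ⟨W, W', hW, hW', hdisj⟩ := t2_separation_nhds hne
      refine ⟨W, hW, fun V hVW _ ↦ ?_⟩
      filter_upwards [hcont.eventually_mem hW'] with x hx
      exact iff_of_false (fun hxV ↦ disjoint_left.1 hdisj (hVW hxV) hx) hne
  obtain ⟨W, hW, hWg⟩ := separate
  obtain ⟨⟨u, v⟩, huv, hsub⟩ := (nhds_basis_Ioo y).mem_iff.1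
    (inter_mem hW (inter_mem (Ioo_mem_nhds hpq.1 hpq.2) (Ioo_mem_nhds hy.1 hy.2)))
  dsimp only at huv hsub
  have hcd' (z) (hz : z ∈ Ioo u v) : z ∈ Ioo c d := (hsub hz).2.2
  have hpq' := (Ioo_subset_Ioo_iff (huv.1.trans huv.2)).1 fun z hz ↦ (hsub hz).2.1
  refine ⟨u, v, huv, hpq'.1, hpq'.2, ?_⟩
  have y_eq : y ∈ A x₀ → y = g x₀ := fun hyA ↦ heq.self_of_nhds y hyA (hcd' y huv)
  filter_upwards [heq, hmem, hWg (Ioo u v) (fun z hz ↦ (hsub hz).1) (Ioo_mem_nhds huv.1 huv.2)]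
    with x hx hxA hxuv
  refine ⟨fun z hz w hw ↦ (hx z hz.1 (hcd' z hz.2)).trans (hx w hw.1 (hcd' w hw.2)).symm, ?_, ?_⟩
  · rintro ⟨z, hzA, hz⟩
    obtain rfl := hx z hzA (hcd' z hz)
    exact hxuv.1 hz ▸ hxA.1 hzA
  · intro hyA
    exact ⟨g x, hxA.2 (mem_of_eq_of_mem (y_eq hyA).symm hyA), hxuv.2 (y_eq hyA)⟩

theorem DefFamily.eventually_cofinite_forall_normalAt (hA : DefFamily L A)
    (hfin : ∀ x, (A x).Finite) : ∀ᶠ x in cofinite, ∀ y, NormalAt A x y := by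
  let N : M → Set M := fun x ↦ {y | NormalAt A x y}
  have hNdef : DefFamily L N := hA.normalAt
  -- `C x` is the right endpoint of the largest initial segment of `N x`. It depends definably on
  -- `x`, so that generically all points near it are normal, and hence it does not exist.
  let C : M → Set M := fun x ↦ {b | (∀ z, z < b → z ∈ N x) ∧ ¬ ∀ᶠ z in 𝓝 b, z ∈ N x}
  have hCdef : DefFamily L C := DefinablePred.defFamily (by fun_prop (disch := assumption))
  have C_subsingleton (x : M) : (C x).Subsingleton := by
    have not_lt' {b b' : M} (hb : b ∈ C x) (hb' : b' ∈ C x) : ¬ b < b' := fun hbb' ↦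
      hb.2 (mem_of_superset (Iio_mem_nhds hbb') hb'.1)
    exact fun b hb b' hb' ↦ le_antisymm (not_lt.1 (not_lt' hb' hb)) (not_lt.1 (not_lt' hb hb'))
  obtain ⟨β, hβ, hβC⟩ := hCdef.exists_defFun₁_mem C_subsingleton
  filter_upwards [hA.eventually_cofinite_eventually_normalAt hfin hβ,
    hA.eventually_cofinite_exists_subset_Ioo hfin] with x₀ hnear ⟨c, d, hcd⟩ y
  have normal_near {b : M} (hb : ∀ z, z < b → z ∈ N x₀) : ∀ᶠ z in 𝓝 b, z ∈ N x₀ :=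
    not_not.1 fun h ↦ (hβC x₀ ⟨b, hb, h⟩).2 hnear
  have normal_below : ∀ z, z < c → z ∈ N x₀ := by
    intro z hz p q hpq
    refine ⟨p, min c q, ⟨hpq.1, lt_min hz hpq.2⟩, le_rfl, min_le_right _ _, ?_⟩
    have disjoint_box {x w} (hx : A x ⊆ Ioo c d) : w ∉ A x ∩ Ioo p (min c q) := fun hw ↦
      (hx hw.1).1.not_gt (hw.2.2.trans_le (min_le_left _ _))
    filter_upwards [hcd] with x hx
    exact ⟨fun w hw ↦ (disjoint_box hx hw).elim, iff_of_false (fun ⟨w, hw⟩ ↦ disjoint_box hx hw)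
      fun hzA ↦ (hcd.self_of_nhds hzA).1.not_gt hz⟩
  have hNx₀ : DefSet1 L (N x₀) := DefinablePred.defSet1 (r := fun z ↦ z ∈ N x₀)
    (.mem_family hNdef (s := fun _ ↦ x₀) (by fun_prop) (by fun_prop))
  exact IsOMinimal.mem_of_forall_lt_imp_eventually_mem L hNx₀ normal_below (fun b ↦ normal_near) y

theorem DefFamily.eventually_forall_mem_Icc_mem_of_normalAt (hA : DefFamily L A) {x₀ : M}
    (hx₀ : ∀ y, NormalAt A x₀ y) {W : Set M} (hW : DefSet1 L W) (hAW : ∀ y ∈ A x₀, W ∈ 𝓝 y)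
    {c d : M} (hcd : c ≤ d) : ∀ᶠ x in 𝓝 x₀, ∀ y ∈ Icc c d, y ∈ A x → y ∈ W := by
  have locally_mem (z : M) :
      ∃ u v, z ∈ Ioo u v ∧ ∀ᶠ x in 𝓝 x₀, ∀ y ∈ Ioo u v, y ∈ A x → y ∈ W := by
    by_cases hz : z ∈ A x₀
    · obtain ⟨u, v, huv, hsub, -⟩ := (hx₀ z).exists_Ioo_subset (hAW z hz)
      exact ⟨u, v, huv, .of_forall fun x y hy _ ↦ hsub hy⟩
    · obtain ⟨u, v, huv, -, hev⟩ := (hx₀ z).exists_Ioo_subset univ_mem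
      exact ⟨u, v, huv, hev.mono fun x hx y hy hyA ↦ (hz (hx.2.1 ⟨y, hyA, hy⟩)).elim⟩
  have hS : DefSet1 L {z | ∀ᶠ x in 𝓝 x₀, ∀ y ∈ Icc c z, y ∈ A x → y ∈ W} :=
    DefinablePred.defSet1 (by fun_prop (disch := assumption))
  refine IsOMinimal.mem_of_forall_eventually_mem_iff L hS hcd (fun z _ ↦ ?_) ?_
  · obtain ⟨u, v, hz, hev⟩ := locally_mem z
    have extend {z₁ z₂ : M} (h₁ : z₁ ∈ Ioo u v) (h₂ : z₂ ∈ Ioo u v)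
        (h : ∀ᶠ x in 𝓝 x₀, ∀ y ∈ Icc c z₁, y ∈ A x → y ∈ W) :
        ∀ᶠ x in 𝓝 x₀, ∀ y ∈ Icc c z₂, y ∈ A x → y ∈ W := by
      filter_upwards [h, hev] with x hx hxuv y hy
      exact (le_or_gt y z₁).elim (fun h ↦ hx y ⟨hy.1, h⟩)
        fun h ↦ hxuv y ⟨h₁.1.trans h, hy.2.trans_lt h₂.2⟩
    filter_upwards [Ioo_mem_nhds hz.1 hz.2] with z' hz' using ⟨extend hz' hz, extend hz hz'⟩
  · obtain ⟨u, v, hc, hev⟩ := locally_mem c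
    exact hev.mono fun x hx y hy ↦ hx y (le_antisymm hy.1 hy.2 ▸ hc)

theorem DefFamily.eventually_cofinite_eventually_ncard_eq (hA : DefFamily L A)
    (hfin : ∀ x, (A x).Finite) :
    ∀ᶠ x₀ in cofinite, ∀ᶠ x in 𝓝 x₀, (A x).ncard = (A x₀).ncard := by
  filter_upwards [hA.eventually_cofinite_forall_normalAt hfin,
    hA.eventually_cofinite_exists_subset_Ioo hfin] with x₀ hnormal ⟨c, d, hcd⟩
  obtain ⟨U, hU, hUdisj⟩ := (hfin x₀).t2_separation
  choose u v huv huvU hev using fun y ↦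
    (hnormal y).exists_Ioo_subset ((hU y).2.mem_nhds (hU y).1)
  have hW : DefSet1 L {y | ∃ z : A x₀, y ∈ Ioo (u z) (v z)} := by
    have : Finite (A x₀) := hfin x₀
    exact DefinablePred.defSet1 (.exists_of_finite fun z ↦ by fun_prop)
  have covered : ∀ᶠ x in 𝓝 x₀, ∀ y ∈ A x, ∃ z ∈ A x₀, y ∈ Ioo (u z) (v z) := by
    rcases le_or_gt c d with h | h
    · filter_upwards [hcd, hA.eventually_forall_mem_Icc_mem_of_normalAt hnormal hW
        (fun y hy ↦ mem_of_superset (Ioo_mem_nhds (huv y).1 (huv y).2) fun z hz ↦ ⟨⟨y, hy⟩, hz⟩) h]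
        with x hx hxW y hy
      obtain ⟨z, hz⟩ := hxW y (Ioo_subset_Icc_self (hx hy)) hy
      exact ⟨z, z.2, hz⟩
    · filter_upwards [hcd] with x hx y hy
      exact absurd ((hx hy).1.trans (hx hy).2) h.not_gt
  filter_upwards [covered, (eventually_all_finite (hfin x₀)).2 fun y _ ↦ hev y] with x hx hxuv
  exact ncard_eq_of_pairwiseDisjoint (U := fun y ↦ Ioo (u y) (v y)) (hUdisj.mono huvU) hx
    fun y hy ↦ ⟨(hxuv y hy).1, (hxuv y hy).2.2 hy⟩

theorem DefFamily.exists_forall_ncard_lt (hA : DefFamily L A) (hfin : ∀ x, (A x).Finite) :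
    ∃ N, ∀ x, (A x).ncard < N := by
  have bounded_on_piece {T : Set M} (hT : IsCell₁ T)
      (h : T.Subsingleton ∨ ∀ x ∈ T, ∀ᶠ y in 𝓝 x, (A y).ncard = (A x).ncard) :
      ∃ N, ∀ x ∈ T, (A x).ncard < N := by
    rcases T.eq_empty_or_nonempty with rfl | ⟨x, hx⟩
    · exact ⟨0, fun x hx ↦ hx.elim⟩
    refine ⟨(A x).ncard + 1, fun y hy ↦ Nat.lt_succ_of_le ?_⟩
    rcases h with h | h
    · rw [h hy hx]
    · have hS : DefSet1 L {z | (A y).ncard ≤ (A z).ncard} := hA.defSet1_le_ncard hfin _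
      exact (IsOMinimal.mem_iff_mem_of_ordConnected L hS hT.ordConnected
        (fun z hz ↦ (h z hz).mono fun w hw ↦ by simp only [mem_ofPred_eq, hw]) hy hx).1
        (le_refl (A y).ncard)
  have bounded_on {D : Set M} (hD : FinDisjUnion (fun T ↦ IsCell₁ T ∧
      (T.Subsingleton ∨ ∀ x ∈ T, ∀ᶠ y in 𝓝 x, (A y).ncard = (A x).ncard)) D) :
      ∃ N, ∀ x ∈ D, (A x).ncard < N := by
    induction hD with
    | empty => exact ⟨0, fun x hx ↦ hx.elim⟩
    | of h => exact bounded_on_piece h.1 h.2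
    | union _ _ _ ihS ihT =>
      obtain ⟨m, hm⟩ := ihS
      obtain ⟨n, hn⟩ := ihT
      exact ⟨max m n, fun x hx ↦ hx.elim (fun h ↦ (hm x h).trans_le (le_max_left m n))
        fun h ↦ (hn x h).trans_le (le_max_right m n)⟩
  obtain ⟨N, hN⟩ := bounded_on (IsCell₁.finDisjUnion_of_eventually_cofinite
    (D := univ) (.inr (.inr (.inr (.inr rfl)))) (hA.eventually_cofinite_eventually_ncard_eq hfin))
  exact ⟨N, fun x ↦ hN x (mem_univ x)⟩

end UniformFiniteness

section Cells

variable {L : FirstOrder.Language} {M : Type*} [LinearOrder M] {D T : Set M} {A G : M → Set M}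
  {f : M → M → M} {σ : M → M} {C : Set (M × M)}

/-- The points of `G x` below all points of `A x ∩ G x`. -/
def bandBelow (A G : M → Set M) (x : M) : Set M :=
  {y | y ∈ G x ∧ ∀ z, z ∈ A x → z ∈ G x → y < z}

theorem notMem_of_mem_bandBelow {x y : M} (hy : y ∈ bandBelow A G x) : y ∉ A x :=
  fun hyA ↦ (hy.2 y hyA hy.1).false

theorem FinDisjUnion.of_split_at {P : Set (M × M) → Prop} (hG : ∀ x, IsUpperSet (G x))
    (hσ : ∀ x ∈ T, σ x ∈ G x) (below : P {p | p.1 ∈ T ∧ p.2 ∈ G p.1 ∧ p.2 < σ p.1})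
    (graph : P {p | p.1 ∈ T ∧ p.2 = σ p.1})
    (above : FinDisjUnion P (Prod.fst ⁻¹' T ∩ {p | p.2 ∈ Ioi (σ p.1)})) :
    FinDisjUnion P (Prod.fst ⁻¹' T ∩ {p | p.2 ∈ G p.1}) := by
  have split : Prod.fst ⁻¹' T ∩ {p : M × M | p.2 ∈ G p.1} =
      {p | p.1 ∈ T ∧ p.2 ∈ G p.1 ∧ p.2 < σ p.1} ∪ ({p | p.1 ∈ T ∧ p.2 = σ p.1} ∪
        (Prod.fst ⁻¹' T ∩ {p | p.2 ∈ Ioi (σ p.1)})) := by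
    ext ⟨x, y⟩
    constructor
    · rintro ⟨hx, hy⟩
      rcases lt_trichotomy y (σ x) with h | h | h
      exacts [.inl ⟨hx, hy, h⟩, .inr (.inl ⟨hx, h⟩), .inr (.inr ⟨hx, h⟩)]
    · rintro (⟨hx, hy, -⟩ | ⟨hx, hy⟩ | ⟨hx, hy⟩)
      exacts [⟨hx, hy⟩, ⟨hx, (mem_of_eq_of_mem hy (hσ x hx) : y ∈ G x)⟩,
        ⟨hx, hG x (le_of_lt hy) (hσ x hx)⟩]
  rw [split]
  refine .union (disjoint_left.2 ?_) (.of below) (.union (disjoint_left.2 ?_) (.of graph) above)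
  · rintro ⟨x, y⟩ ⟨-, -, hy⟩ (⟨-, hy'⟩ | ⟨-, hy'⟩)
    exacts [hy.ne hy', hy.not_gt hy']
  · rintro ⟨x, y⟩ ⟨-, hy⟩ ⟨-, hy'⟩
    exact (lt_of_lt_of_eq hy' hy).false

variable [L.Structure M] [TopologicalSpace M]

variable (L) in
/-- The set `C ⊆ M²` is the graph of a continuous definable function on `D`, or a band over `D`
bounded below and above by continuous definable functions or by `±∞`. -/
def IsCellOver (D : Set M) (C : Set (M × M)) : Prop :=
  (∃ h : M → M, DefFunOn1 L D h ∧ ContinuousOn h D ∧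
      C = {p : M × M | p.1 ∈ D ∧ p.2 = h p.1}) ∨
    (∃ g h : M → M, DefFunOn1 L D g ∧ ContinuousOn g D ∧ DefFunOn1 L D h ∧ ContinuousOn h D ∧
      C = {p : M × M | p.1 ∈ D ∧ g p.1 < p.2 ∧ p.2 < h p.1}) ∨
    (∃ h : M → M, DefFunOn1 L D h ∧ ContinuousOn h D ∧
      C = {p : M × M | p.1 ∈ D ∧ p.2 < h p.1}) ∨
    (∃ g : M → M, DefFunOn1 L D g ∧ ContinuousOn g D ∧
      C = {p : M × M | p.1 ∈ D ∧ g p.1 < p.2}) ∨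
    C = {p : M × M | p.1 ∈ D}

variable (L) in
/-- The set `C` is a cell of `M²` which contains no vertical line and on the fibres of which the
functions `f x` are all strictly increasing, all strictly decreasing, or all constant. -/
def IsMonotoneCell (f : M → M → M) (C : Set (M × M)) : Prop :=
  (¬ ∃ c : M, ∀ y : M, (c, y) ∈ C) ∧ (∃ D, IsCell₁ D ∧ IsCellOver L D C) ∧
    ∃ o, ∀ x, ComparesOn o (f x) {y | (x, y) ∈ C}

variable (L) in
/-- The sets `G x` are the rays above a continuous definable function on `D`, or all of `M`. -/
def IsRayFamilyOn (D : Set M) (G : M → Set M) : Prop :=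
  (∃ g : M → M, DefFun₁ L g ∧ ContinuousOn g D ∧ G = fun x ↦ Ioi (g x)) ∨ G = fun _ ↦ univ

theorem isMonotoneCell_of_subset_bandBelow (hne : ∀ x, (A x).Nonempty) (hT : IsCell₁ T)
    (hC : IsCellOver L T C) (hsub : ∀ p ∈ C, p.1 ∈ T ∧ p.2 ∈ bandBelow A G p.1) {o : Ordering}
    (ho : ∀ x ∈ T, ComparesOn o (f x) (bandBelow A G x)) : IsMonotoneCell L f C := by
  refine ⟨fun ⟨c, hc⟩ ↦ ?_, ⟨T, hT, hC⟩, o, fun x y hy z hz hyz ↦ ?_⟩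
  · obtain ⟨z, hz⟩ := hne c
    exact notMem_of_mem_bandBelow (hsub _ (hc z)).2 hz
  · exact ho x (hsub _ hy).1 (hsub _ hy).2 (hsub _ hz).2 hyz

theorem IsRayFamilyOn.mono (hG : IsRayFamilyOn L D G) (h : T ⊆ D) : IsRayFamilyOn L T G :=
  hG.imp_left fun ⟨g, hg, hcont, hG⟩ ↦ ⟨g, hg, hcont.mono h, hG⟩

theorem IsRayFamilyOn.isUpperSet (hG : IsRayFamilyOn L D G) (x : M) : IsUpperSet (G x) := by
  rcases hG with ⟨g, -, -, rfl⟩ | rfl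
  exacts [isUpperSet_Ioi (g x), isUpperSet_univ]

theorem IsRayFamilyOn.ordConnected_bandBelow (hG : IsRayFamilyOn L D G) (x : M) :
    (bandBelow A G x).OrdConnected :=
  ⟨fun _ hy _ hz _ hw ↦
    ⟨hG.isUpperSet x hw.1 hy.1, fun z' hzA hzG ↦ hw.2.trans_lt (hz.2 z' hzA hzG)⟩⟩

variable [IsOMinimal L M]

theorem isMonotoneCell_graph [NoMaxOrder M] (hT : IsCell₁ T) (hσ : DefFun₁ L σ)
    (hcont : ContinuousOn σ T) : IsMonotoneCell L f {p | p.1 ∈ T ∧ p.2 = σ p.1} := by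
  refine ⟨fun ⟨c, hc⟩ ↦ ?_, ⟨T, hT, .inl ⟨σ, hσ.defFunOn1 hT.defSet1, hcont, rfl⟩⟩, .eq,
    fun x y hy z hz hyz ↦ absurd (hy.2.trans hz.2.symm) hyz.ne⟩
  obtain ⟨y, hy⟩ := exists_gt (σ c)
  exact hy.ne' (hc y).2

namespace IsRayFamilyOn

theorem defFamily (hG : IsRayFamilyOn L D G) : DefFamily L G := by
  rcases hG with ⟨g, hg, -, rfl⟩ | rfl
  · exact DefinablePred.defFamily (.lt (hg.comp (by fun_prop)) (by fun_prop))
  · exact DefinablePred.defFamily (r := fun _ _ ↦ True) (by fun_prop)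

theorem isCellOver (hG : IsRayFamilyOn L D G) (hD : IsCell₁ D) :
    IsCellOver L D {p | p.1 ∈ D ∧ p.2 ∈ G p.1} := by
  rcases hG with ⟨g, hg, hcont, rfl⟩ | rfl
  · exact .inr (.inr (.inr (.inl ⟨g, hg.defFunOn1 hD.defSet1, hcont, rfl⟩)))
  · exact .inr (.inr (.inr (.inr (by simp only [mem_univ, and_true]))))

theorem isCellOver_lt (hG : IsRayFamilyOn L D G) (hD : IsCell₁ D) (hσ : DefFun₁ L σ)
    (hcont : ContinuousOn σ D) : IsCellOver L D {p | p.1 ∈ D ∧ p.2 ∈ G p.1 ∧ p.2 < σ p.1} := by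
  have hσD : DefFunOn1 L D σ := hσ.defFunOn1 hD.defSet1
  rcases hG with ⟨g, hg, hgcont, rfl⟩ | rfl
  · exact .inr (.inl ⟨g, σ, hg.defFunOn1 hD.defSet1, hgcont, hσD, hcont, rfl⟩)
  · exact .inr (.inr (.inl ⟨σ, hσD, hcont, by simp only [mem_univ, true_and]⟩))

end IsRayFamilyOn

variable [OrderTopology M] [DenselyOrdered M] [NoMinOrder M] [NoMaxOrder M]

theorem IsCell₁.exists_finDisjUnion_bandBelow (hf : DefFun₂ L f) (hA : DefFamily L A)
    (hfin : ∀ x, (A x).Finite) (hloc : ∀ x, ∀ y ∉ A x, ∃ o, LocallyCompares o (f x) y)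
    (hD : IsCell₁ D) (hG : IsRayFamilyOn L D G) :
    ∃ σ, DefFun₁ L σ ∧ FinDisjUnion (fun T ↦ IsCell₁ T ∧ ContinuousOn σ T ∧
      ((∀ x ∈ T, IsLeast (A x ∩ G x) (σ x)) ∨ ∀ x ∈ T, A x ∩ G x = ∅) ∧
      ∃ o, ∀ x ∈ T, ComparesOn o (f x) (bandBelow A G x)) D := by
  have hGdef : DefFamily L G := hG.defFamily
  have hleast : DefFamily L fun x ↦ {y | (y ∈ A x ∧ y ∈ G x) ∧ ∀ z, z ∈ A x → z ∈ G x → y ≤ z} :=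
    DefinablePred.defFamily (by fun_prop (disch := assumption))
  obtain ⟨σ, hσ, hσleast⟩ := hleast.exists_defFun₁_mem fun x y hy z hz ↦
    le_antisymm (hy.2 z hz.1.1 hz.1.2) (hz.2 y hy.1.1 hy.1.2)
  have hB : DefFamily L (bandBelow A G) :=
    DefinablePred.defFamily (by fun_prop (disch := assumption))
  let S : Option Ordering → Set M := fun i ↦
    i.elim {x | ∃ y, y ∈ A x ∧ y ∈ G x} fun o ↦ {x | ComparesOn o (f x) (bandBelow A G x)}
  have hS (i : Option Ordering) : DefSet1 L (S i) := by
    rcases i with _ | o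
    · exact DefinablePred.defSet1 (r := fun x ↦ ∃ y, y ∈ A x ∧ y ∈ G x)
        (by fun_prop (disch := assumption))
    · refine DefinablePred.defSet1 (r := fun x ↦ ComparesOn o (f x) (bandBelow A G x))
        (.forall (.imp (by fun_prop (disch := assumption)) (.forall
          (.imp (by fun_prop (disch := assumption)) (.imp (by fun_prop) (.compares o ?_ ?_))))))
      all_goals exact hf.comp (by fun_prop) (by fun_prop)
  refine ⟨σ, hσ, (hD.finDisjUnion_continuousOn hσ hS).bind
    fun T _ ⟨hT, hcont, hiff⟩ ↦ .of ⟨hT, hcont, ?_⟩⟩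
  rcases T.eq_empty_or_nonempty with rfl | ⟨x₀, hx₀⟩
  · exact ⟨.inl nofun, .eq, nofun⟩
  constructor
  · by_cases hE : x₀ ∈ S none
    · refine .inl fun x hx ↦ ?_
      have h := hσleast x ?_
      · exact ⟨h.1, fun z hz ↦ h.2 z hz.1 hz.2⟩
      obtain ⟨y, hy, hmin⟩ := exists_min_image (A x ∩ G x) id ((hfin x).inter_of_left _)
        ((hiff none x₀ hx₀ x hx).1 hE)
      exact ⟨y, hy, fun z hzA hzG ↦ hmin z ⟨hzA, hzG⟩⟩
    · exact .inr fun x hx ↦ not_nonempty_iff_eq_empty.1 (mt (hiff none x hx x₀ hx₀).1 hE)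
  · have hfx₀ : DefFun₁ L (f x₀) := hf.comp (by fun_prop) (by fun_prop)
    obtain ⟨o, ho⟩ := hfx₀.exists_comparesOn_of_ordConnected (hG.ordConnected_bandBelow x₀)
      fun y hy ↦ hloc x₀ y (notMem_of_mem_bandBelow hy)
    exact ⟨o, fun x hx ↦ (hiff (some o) x₀ hx₀ x hx).1 ho⟩

theorem IsCell₁.finDisjUnion_isMonotoneCell (hf : DefFun₂ L f) (hA : DefFamily L A)
    (hfin : ∀ x, (A x).Finite) (hloc : ∀ x, ∀ y ∉ A x, ∃ o, LocallyCompares o (f x) y)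
    (hne : ∀ x, (A x).Nonempty) {N : ℕ}
    (hD : IsCell₁ D) (hG : IsRayFamilyOn L D G) (hN : ∀ x ∈ D, (A x ∩ G x).ncard < N) :
    FinDisjUnion (IsMonotoneCell L f) (Prod.fst ⁻¹' D ∩ {p | p.2 ∈ G p.1}) := by
  induction N generalizing D G with
  | zero =>
    obtain rfl : D = ∅ := eq_empty_of_forall_notMem fun x hx ↦ (hN x hx).not_ge (Nat.zero_le _)
    simpa only [preimage_empty, empty_inter] using .empty
  | succ N ih =>
    obtain ⟨σ, hσ, h⟩ := hD.exists_finDisjUnion_bandBelow hf hA hfin hloc hG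
    refine h.preimage_inter fun T hTD ⟨hT, hcont, hcases, o, ho⟩ ↦ ?_
    have hGT : IsRayFamilyOn L T G := hG.mono hTD
    rcases hcases with hleast | hempty
    · refine .of_split_at hG.isUpperSet (fun x hx ↦ (hleast x hx).1.2) ?_
        (isMonotoneCell_graph hT hσ hcont) (ih hT (.inl ⟨σ, hσ, hcont, rfl⟩) fun x hx ↦ ?_)
      · exact isMonotoneCell_of_subset_bandBelow hne hT (hGT.isCellOver_lt hT hσ hcont)
          (fun p hp ↦ ⟨hp.1, hp.2.1, fun z hzA hzG ↦
            hp.2.2.trans_le ((hleast p.1 hp.1).2 ⟨hzA, hzG⟩)⟩) ho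
      · have subset : A x ∩ Ioi (σ x) ⊆ A x ∩ G x := fun y hy ↦
          ⟨hy.1, hG.isUpperSet x (le_of_lt hy.2) (hleast x hx).1.2⟩
        exact (ncard_lt_ncard ⟨subset, fun h ↦ lt_irrefl _ (h (hleast x hx).1).2⟩
          ((hfin x).inter_of_left _)).trans_le (Nat.le_of_lt_succ (hN x (hTD hx)))
    · refine .of (isMonotoneCell_of_subset_bandBelow hne hT (hGT.isCellOver hT)
        (fun p hp ↦ ⟨hp.1, hp.2, fun z hzA hzG ↦ ?_⟩) ho)
      exact (notMem_empty z (hempty p.1 hp.1 ▸ ⟨hzA, hzG⟩)).elim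

end Cells

section CellDecomposition

theorem ComparesOn.forall_strictMonoOn_or_strictAntiOn_or_const {ι M : Type*} [LinearOrder M]
    {o : Ordering} {F : ι → M → M} {I : Set ι} {s : ι → Set M}
    (h : ∀ x ∈ I, ComparesOn o (F x) (s x)) :
    (∀ x ∈ I, StrictMonoOn (F x) (s x)) ∨ (∀ x ∈ I, StrictAntiOn (F x) (s x)) ∨
      ∀ x ∈ I, ∀ y₁ ∈ s x, ∀ y₂ ∈ s x, F x y₁ = F x y₂ := by
  cases o
  · exact .inl h
  · refine .inr (.inr fun x hx y₁ h₁ y₂ h₂ ↦ ?_)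
    rcases lt_trichotomy y₁ y₂ with hlt | rfl | hgt
    exacts [h x hx h₁ h₂ hlt, rfl, (h x hx h₂ h₁ hgt).symm]
  · exact .inr (.inl h)

theorem exists_defFun₂_of_definablePred_graph {L : FirstOrder.Language} {M : Type*} [L.Structure M]
    {S : Set M} (hS : DefSet1 L S) {f : M → M → M}
    (hf : DefinablePred L fun v : Fin 3 → M ↦ v 0 ∈ S ∧ f (v 0) (v 1) = v 2) :
    ∃ f', DefFun₂ L f' ∧ ∀ x ∈ S, f' x = f x := by
  classical
  refine ⟨fun x y ↦ if x ∈ S then f x y else y, .of_graph ?_, fun x hx ↦ by simp only [hx, if_true]⟩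
  have graph (v : Fin 3 → M) : (if v 0 ∈ S then f (v 0) (v 1) else v 1) = v 2 ↔
      (v 0 ∈ S ∧ f (v 0) (v 1) = v 2) ∨ (v 0 ∉ S ∧ v 1 = v 2) := by
    split_ifs with h <;> simp only [h, true_and, false_and, not_true, not_false_eq_true, or_false,
      false_or]
  simp only [graph]
  exact .or hf (by fun_prop (disch := assumption))

variable {M : Type*} [LinearOrder M]

theorem finDisjUnion_isCell₁_Icc {a b : M} (hab : a < b) : FinDisjUnion IsCell₁ (Icc a b) := by
  rw [← Ico_union_right hab.le, ← Ioo_union_left hab]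
  exact .union (by simp [hab.ne']) (.union (by simp)
    (.of (.inr (.inl ⟨a, b, rfl⟩))) (.of (.inl ⟨a, rfl⟩))) (.of (.inl ⟨b, rfl⟩))

variable {L : FirstOrder.Language} [L.Structure M] [IsOMinimal L M]
  [TopologicalSpace M] [OrderTopology M] [DenselyOrdered M] [NoMinOrder M] [NoMaxOrder M]

theorem FinDisjUnion.prod_univ_isMonotoneCell {S : Set M} (hS : FinDisjUnion IsCell₁ S)
    {f : M → M → M} (hf : DefFun₂ L f) : FinDisjUnion (IsMonotoneCell L f) (S ×ˢ univ) := by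
  -- The diagonal point is added so that no fibre `A x` is empty: a cell which avoids `A` then
  -- contains no vertical line.
  let A : M → Set M := fun x ↦ {y | y = x ∨ ¬ ∃ o, LocallyCompares o (f x) y}
  have hA : DefFamily L A := DefinablePred.defFamily
    (.or (by fun_prop) (.not (.exists_of_finite fun o ↦ hf.defFamily_locallyCompares o)))
  have hfin (x : M) : (A x).Finite := by
    have hfx : DefFun₁ L (f x) := hf.comp (by fun_prop) (by fun_prop)
    exact (finite_singleton x).union hfx.eventually_cofinite_locallyCompares
  have hloc (x y : M) (hy : y ∉ A x) : ∃ o, LocallyCompares o (f x) y :=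
    not_not.1 (not_or.1 hy).2
  obtain ⟨N, hN⟩ := hA.exists_forall_ncard_lt hfin
  rw [Set.prod_eq]
  exact hS.preimage_inter fun D _ hD ↦ hD.finDisjUnion_isMonotoneCell hf hA hfin hloc
    (fun x ↦ ⟨x, .inl rfl⟩) (.inr rfl) fun x _ ↦ by simpa only [inter_univ] using hN x

end CellDecomposition

/-- Cell partition adapted to fiberwise monotonicity. -/
theorem stmt_17 (L : FirstOrder.Language) (M : Type*) [L.Structure M]
    [LinearOrder M] [DenselyOrdered M] [NoMinOrder M] [NoMaxOrder M] [Nonempty M]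
    [TopologicalSpace M] [OrderTopology M]
    (hlt : DefSet L {x : Fin 2 → M | x 0 < x 1})
    (homin : ∀ X : Set M, DefSet1 L X → FinUnionPtsItvls X)
    (a b : M) (hab : a < b) (f : M → M → M)
    (hfdef : DefSet L {x : Fin 3 → M | x 0 ∈ Set.Icc a b ∧ f (x 0) (x 1) = x 2}) :
    ∃ (k : ℕ) (C : Fin k → Set (M × M)),
      (⋃ i, C i) = Set.Icc a b ×ˢ (Set.univ : Set M) ∧
      (∀ i j, i ≠ j → Disjoint (C i) (C j)) ∧
      ∀ i,
        (¬ ∃ c : M, ∀ y : M, (c, y) ∈ C i) ∧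
        (∃ D : Set M, ((∃ x₀ : M, D = {x₀}) ∨ IsOpenItvl D) ∧
          ((∃ h : M → M, DefFunOn1 L D h ∧ ContinuousOn h D ∧
              C i = {p : M × M | p.1 ∈ D ∧ p.2 = h p.1}) ∨
           (∃ g h : M → M, DefFunOn1 L D g ∧ ContinuousOn g D ∧
              DefFunOn1 L D h ∧ ContinuousOn h D ∧
              C i = {p : M × M | p.1 ∈ D ∧ g p.1 < p.2 ∧ p.2 < h p.1}) ∨
           (∃ h : M → M, DefFunOn1 L D h ∧ ContinuousOn h D ∧
              C i = {p : M × M | p.1 ∈ D ∧ p.2 < h p.1}) ∨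
           (∃ g : M → M, DefFunOn1 L D g ∧ ContinuousOn g D ∧
              C i = {p : M × M | p.1 ∈ D ∧ g p.1 < p.2}) ∨
           C i = {p : M × M | p.1 ∈ D})) ∧
        ((∀ x ∈ Prod.fst '' C i, StrictMonoOn (f x) {y : M | (x, y) ∈ C i}) ∨
         (∀ x ∈ Prod.fst '' C i, StrictAntiOn (f x) {y : M | (x, y) ∈ C i}) ∨
         (∀ x ∈ Prod.fst '' C i, ∀ y₁ ∈ {y : M | (x, y) ∈ C i},
            ∀ y₂ ∈ {y : M | (x, y) ∈ C i}, f x y₁ = f x y₂)) := by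
  have : IsOMinimal L M := ⟨hlt, homin⟩
  have hIcc : FinDisjUnion IsCell₁ (Icc a b) := finDisjUnion_isCell₁_Icc hab
  obtain ⟨f', hf', hff'⟩ : ∃ f', DefFun₂ L f' ∧ ∀ x ∈ Icc a b, f' x = f x :=
    exists_defFun₂_of_definablePred_graph
      (DefinablePred.defSet1 (r := fun x ↦ x ∈ Icc a b) (by fun_prop)) hfdef
  obtain ⟨k, C, hunion, hdisj, hmono⟩ := (hIcc.prod_univ_isMonotoneCell hf').exists_fin
  refine ⟨k, C, hunion, hdisj, fun i ↦ ?_⟩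
  obtain ⟨hline, hcell, o, ho⟩ := hmono i
  refine ⟨hline, hcell, ComparesOn.forall_strictMonoOn_or_strictAntiOn_or_const (o := o) ?_⟩
  rintro _ ⟨⟨x, y⟩, hxy, rfl⟩
  have hx : x ∈ Icc a b := (hunion.subset (mem_iUnion_of_mem i hxy)).1
  exact hff' x hx ▸ ho x
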